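/- arXiv:1107.1074 — 3 statements merged into one kernel-verified Lean document; each statement's English description precedes it below -/
import Mathlib

section
/- Let d ≥ 3, r ∈ ℤ^d, and set m := ⌊d/2⌋ - 1 and K_d(λ; r) := (G_0(0, r) - G_λ(0, r))/λ for λ > 0. Then the m-th derivative of K_d(·; r) satisfies, as λ → 0+: (-1)^m K_d^{(m)}(λ; r) ~ 2γ_d √π/((d-2)√λ) if d is odd, and (-1)^m K_d^{(m)}(λ; r) ~ 2γ_d/((d-2)λ) if d is even. -/
open MeasureTheory Real Filter Topology Asymptotics

/-- Fourier symbol `φ(θ) = ∑_z a(z) cos⟨z,θ⟩` of the random walk on `ℤ^d`. -/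
noncomputable def phiSymb (d : ℕ) (a : (Fin d → ℤ) → ℝ) (θ : Fin d → ℝ) : ℝ :=
  ∑' z : Fin d → ℤ, a z * Real.cos (∑ i, (z i : ℝ) * θ i)

/-- Transition probability `p(t;x,y) = (2π)^{-d} ∫_{[-π,π]^d} e^{φ(θ)t} cos⟨θ,y-x⟩ dθ`. -/
noncomputable def ptrans (d : ℕ) (a : (Fin d → ℤ) → ℝ) (t : ℝ) (x y : Fin d → ℤ) : ℝ :=
  ((2 * π) ^ d)⁻¹ *
    ∫ θ in Set.Icc (fun _ : Fin d => -π) (fun _ : Fin d => π),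
      Real.exp (phiSymb d a θ * t) * Real.cos (∑ i, θ i * ((y i : ℝ) - (x i : ℝ)))

/-- Laplace transform `G_λ(x,y) = ∫_0^∞ e^{-λt} p(t;x,y) dt` (Green's function at `λ = 0`). -/
noncomputable def Glam (d : ℕ) (a : (Fin d → ℤ) → ℝ) (lam : ℝ) (x y : Fin d → ℤ) : ℝ :=
  ∫ t in Set.Ioi (0 : ℝ), Real.exp (-lam * t) * ptrans d a t x y

/-- Hessian matrix `φ''(0)`, with entries `-∑_z a(z) z_i z_j`. -/
noncomputable def hessPhi (d : ℕ) (a : (Fin d → ℤ) → ℝ) : Matrix (Fin d) (Fin d) ℝ :=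
  Matrix.of fun i j => -∑' z : Fin d → ℤ, a z * (z i : ℝ) * (z j : ℝ)

/-- `γ_d = (2π)^{-d/2} |det φ''(0)|^{-1/2}`. -/
noncomputable def gammaConst (d : ℕ) (a : (Fin d → ℤ) → ℝ) : ℝ :=
  ((2 * π) ^ ((d : ℝ) / 2))⁻¹ * (Real.sqrt |(hessPhi d a).det|)⁻¹

/-- `ρ_d(x) = (a/(2π)^d) ∫_{[-π,π]^d} (cos⟨x,θ⟩ - 1)/φ(θ) dθ` for `x ≠ 0`, and `ρ_d(0) = 1`. -/
noncomputable def rhoConst (d : ℕ) (a : (Fin d → ℤ) → ℝ) (x : Fin d → ℤ) : ℝ :=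
  if x = 0 then 1 else
    (-(a 0) / (2 * π) ^ d) *
      ∫ θ in Set.Icc (fun _ : Fin d => -π) (fun _ : Fin d => π),
        (Real.cos (∑ i, (x i : ℝ) * θ i) - 1) / phiSymb d a θ

/-- `γ̃_d(z) = (1/(2(2π)^d)) ∫_{ℝ^d} ⟨v,z⟩² e^{⟨φ''(0)v,v⟩/2} dv`. -/
noncomputable def gammaTilde (d : ℕ) (a : (Fin d → ℤ) → ℝ) (z : Fin d → ℤ) : ℝ :=
  (2 * (2 * π) ^ d)⁻¹ *
    ∫ v : Fin d → ℝ, (∑ i, v i * (z i : ℝ)) ^ 2 *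
      Real.exp ((∑ i, (hessPhi d a).mulVec v i * v i) / 2)

lemma summable_mul_cos_sum {d : ℕ} {a : (Fin d → ℤ) → ℝ} (ha : Summable a) (θ : Fin d → ℝ) :
    Summable fun z : Fin d → ℤ => a z * Real.cos (∑ i, (z i : ℝ) * θ i) := by
  refine Summable.of_norm_bounded ha.abs fun z => ?_
  rw [Real.norm_eq_abs, abs_mul]
  exact mul_le_of_le_one_right (abs_nonneg _) (Real.abs_cos_le_one _)

lemma continuous_phiSymb {d : ℕ} {a : (Fin d → ℤ) → ℝ} (ha : Summable a) :
    Continuous (phiSymb d a) := by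
  refine continuous_tsum (fun z => by fun_prop) ha.abs fun z θ => ?_
  rw [Real.norm_eq_abs, abs_mul]
  exact mul_le_of_le_one_right (abs_nonneg _) (Real.abs_cos_le_one _)

lemma hasSum_neg_phiSymb {d : ℕ} {a : (Fin d → ℤ) → ℝ} (hsum : HasSum a 0) (θ : Fin d → ℝ) :
    HasSum (fun z : Fin d → ℤ => a z * (1 - Real.cos (∑ i, (z i : ℝ) * θ i)))
      (-phiSymb d a θ) := by
  have h := hsum.sub (summable_mul_cos_sum hsum.summable θ).hasSum
  simp only [mul_sub, mul_one]
  rw [zero_sub] at h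
  exact h

lemma mul_one_sub_cos_nonneg {d : ℕ} {a : (Fin d → ℤ) → ℝ}
    (hpos : ∀ z : Fin d → ℤ, z ≠ 0 → 0 ≤ a z) (θ : Fin d → ℝ) (z : Fin d → ℤ) :
    0 ≤ a z * (1 - Real.cos (∑ i, (z i : ℝ) * θ i)) := by
  rcases eq_or_ne z 0 with rfl | hz
  · simp
  · exact mul_nonneg (hpos z hz) (sub_nonneg.2 (Real.cos_le_one _))

lemma phiSymb_nonpos {d : ℕ} {a : (Fin d → ℤ) → ℝ}
    (hpos : ∀ z : Fin d → ℤ, z ≠ 0 → 0 ≤ a z) (hsum : HasSum a 0) (θ : Fin d → ℝ) :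
    phiSymb d a θ ≤ 0 :=
  neg_nonneg.1 ((hasSum_neg_phiSymb hsum θ).nonneg (mul_one_sub_cos_nonneg hpos θ))

lemma abs_sin_add_le (x y : ℝ) : |Real.sin (x + y)| ≤ |Real.sin x| + |Real.sin y| := by
  rw [Real.sin_add]
  refine (abs_add_le _ _).trans ?_
  rw [abs_mul, abs_mul]
  gcongr
  · exact mul_le_of_le_one_right (abs_nonneg _) (Real.abs_cos_le_one _)
  · exact mul_le_of_le_one_left (abs_nonneg _) (Real.abs_cos_le_one _)

/-- The frequencies `z` for which `sin² (⟨z, θ⟩ / 2)` is controlled by `-φ(θ)` form a subgroup. -/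
lemma exists_sin_sq_le_neg_phiSymb {d : ℕ} {a : (Fin d → ℤ) → ℝ}
    (hpos : ∀ z : Fin d → ℤ, z ≠ 0 → 0 ≤ a z) (hsum : HasSum a 0)
    (hirr : AddSubgroup.closure {z : Fin d → ℤ | 0 < a z} = ⊤) (z : Fin d → ℤ) :
    ∃ C : ℝ, 0 ≤ C ∧ ∀ θ : Fin d → ℝ,
      Real.sin ((∑ i, (z i : ℝ) * θ i) / 2) ^ 2 ≤ C * -phiSymb d a θ := by
  have hz : z ∈ AddSubgroup.closure {z : Fin d → ℤ | 0 < a z} := hirr ▸ AddSubgroup.mem_top z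
  induction hz using AddSubgroup.closure_induction with
  | mem z hz =>
    have hz : 0 < a z := hz
    refine ⟨(2 * a z)⁻¹, by positivity, fun θ => ?_⟩
    have h1 := le_hasSum (hasSum_neg_phiSymb hsum θ) z
      (fun w _ => mul_one_sub_cos_nonneg hpos θ w)
    have h2 := Real.cos_sq' ((∑ i, (z i : ℝ) * θ i) / 2)
    have h3 := Real.cos_two_mul ((∑ i, (z i : ℝ) * θ i) / 2)
    rw [mul_div_cancel₀ _ (two_ne_zero)] at h3
    rw [inv_mul_eq_div, le_div_iff₀ (by positivity)]
    rw [h3, h2] at h1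
    linarith
  | zero => exact ⟨0, le_rfl, fun θ => by simp⟩
  | add x y _ _ hx hy =>
    obtain ⟨C, hC, hx⟩ := hx
    obtain ⟨D, hD, hy⟩ := hy
    refine ⟨2 * C + 2 * D, by positivity, fun θ => ?_⟩
    have h := abs_sin_add_le ((∑ i, (x i : ℝ) * θ i) / 2) ((∑ i, (y i : ℝ) * θ i) / 2)
    have hxy : (∑ i, ((x + y) i : ℝ) * θ i) / 2
        = (∑ i, (x i : ℝ) * θ i) / 2 + (∑ i, (y i : ℝ) * θ i) / 2 := by
      simp [add_mul, Finset.sum_add_distrib, add_div]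
    have hx := hx θ
    have hy := hy θ
    simp only [hxy]
    rw [← sq_abs] at hx hy ⊢
    nlinarith [pow_le_pow_left₀ (abs_nonneg _) h 2,
      sq_nonneg (|Real.sin ((∑ i, (x i : ℝ) * θ i) / 2)| - |Real.sin ((∑ i, (y i : ℝ) * θ i) / 2)|)]
  | neg x _ hx =>
    obtain ⟨C, hC, hx⟩ := hx
    refine ⟨C, hC, fun θ => ?_⟩
    have hneg : (∑ i, ((-x) i : ℝ) * θ i) / 2 = -((∑ i, (x i : ℝ) * θ i) / 2) := by
      simp [neg_div]
    rw [hneg, Real.sin_neg, neg_sq]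
    exact hx θ

/-- On the torus `[-π, π]^d` the symbol is bounded above by a negative definite quadratic form. -/
lemma exists_phiSymb_le_neg_mul_sq {d : ℕ} {a : (Fin d → ℤ) → ℝ}
    (hpos : ∀ z : Fin d → ℤ, z ≠ 0 → 0 ≤ a z) (hsum : HasSum a 0)
    (hirr : AddSubgroup.closure {z : Fin d → ℤ | 0 < a z} = ⊤) :
    ∃ c : ℝ, 0 < c ∧ ∀ θ ∈ Set.Icc (fun _ : Fin d => -π) (fun _ : Fin d => π),
      phiSymb d a θ ≤ -c * ∑ i, θ i ^ 2 := by
  choose C hC h using fun j : Fin d => exists_sin_sq_le_neg_phiSymb hpos hsum hirr (Pi.single j 1)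
  have hS : 0 ≤ ∑ j, C j := Finset.sum_nonneg fun j _ => hC j
  refine ⟨(π ^ 2 * (∑ j, C j + 1))⁻¹, by positivity, fun θ hθ => ?_⟩
  have key : ∑ j, θ j ^ 2 ≤ π ^ 2 * ((∑ j, C j) * -phiSymb d a θ) := by
    rw [Finset.sum_mul, Finset.mul_sum]
    refine Finset.sum_le_sum fun j _ => ?_
    have h1 := h j θ
    have h2 : ∑ i, ((Pi.single j 1 : Fin d → ℤ) i : ℝ) * θ i = θ j := by
      rw [Finset.sum_eq_single j] <;> simp +contextual
    rw [h2] at h1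
    have h3 : |θ j / 2| ≤ π / 2 := by
      rw [abs_le]; constructor <;> linarith [hθ.1 j, hθ.2 j]
    have h4 := pow_le_pow_left₀ (by positivity) (Real.mul_abs_le_abs_sin h3) 2
    rw [mul_pow, sq_abs, sq_abs] at h4
    have h5 : θ j ^ 2 = π ^ 2 * ((2 / π) ^ 2 * (θ j / 2) ^ 2) := by
      field_simp
    rw [h5]
    exact mul_le_mul_of_nonneg_left (h4.trans h1) (sq_nonneg π)
  have h0 := phiSymb_nonpos hpos hsum θ
  have h6 : ∑ j, θ j ^ 2 ≤ -phiSymb d a θ * (π ^ 2 * (∑ j, C j + 1)) := by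
    nlinarith [mul_nonneg (sq_nonneg π) (neg_nonneg.2 h0)]
  rw [neg_mul, le_neg, inv_mul_eq_div, div_le_iff₀ (by positivity)]
  exact h6

lemma tendsto_sq_mul_one_sub_cos_div (x : ℝ) :
    Tendsto (fun s : ℝ => s ^ 2 * (1 - Real.cos (x / s))) atTop (𝓝 (x ^ 2 / 2)) := by
  have h1 : HasDerivAt (fun y : ℝ => Real.sin (x / 2 * y)) (x / 2) 0 := by
    simpa using ((hasDerivAt_id (0 : ℝ)).const_mul (x / 2)).sin
  have h2 := h1.tendsto_slope_zero_right.comp tendsto_inv_atTop_nhdsGT_zero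
  have h3 := (h2.pow 2).const_mul 2
  have : 2 * (x / 2) ^ 2 = x ^ 2 / 2 := by ring
  rw [this] at h3
  refine h3.congr' ?_
  filter_upwards [eventually_gt_atTop 0] with s hs
  have h4 := Real.cos_two_mul (x / 2 * s⁻¹)
  rw [Real.cos_sq', show 2 * (x / 2 * s⁻¹) = x / s by ring] at h4
  simp only [Function.comp, zero_add, mul_zero, Real.sin_zero, sub_zero, smul_eq_mul, inv_inv, h4]
  ring

lemma sq_mul_one_sub_cos_div_le (x : ℝ) {s : ℝ} (hs : s ≠ 0) :
    s ^ 2 * (1 - Real.cos (x / s)) ≤ x ^ 2 / 2 := by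
  have h1 := Real.one_sub_sq_div_two_le_cos (x := x / s)
  have h2 : x ^ 2 / 2 = s ^ 2 * ((x / s) ^ 2 / 2) := by field_simp
  rw [h2]
  gcongr
  linarith

lemma sum_intCast_mul_sq_le {d : ℕ} (z : Fin d → ℤ) (v : Fin d → ℝ) :
    (∑ i, (z i : ℝ) * v i) ^ 2 ≤ (∑ i, (z i : ℝ) ^ 2) * ∑ i, v i ^ 2 :=
  Finset.sum_mul_sq_le_sq_mul_sq _ _ _

lemma tendsto_sq_mul_phiSymb {d : ℕ} {a : (Fin d → ℤ) → ℝ}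
    (hpos : ∀ z : Fin d → ℤ, z ≠ 0 → 0 ≤ a z) (hsum : HasSum a 0)
    (hvar : Summable fun z : Fin d → ℤ => (∑ i, ((z i : ℝ)) ^ 2) * a z) (v : Fin d → ℝ) :
    Tendsto (fun s : ℝ => s ^ 2 * phiSymb d a (s⁻¹ • v)) atTop
      (𝓝 (-∑' z : Fin d → ℤ, a z * ((∑ i, (z i : ℝ) * v i) ^ 2 / 2))) := by
  have h : Tendsto (fun s : ℝ => ∑' z : Fin d → ℤ,
      a z * (s ^ 2 * (1 - Real.cos ((∑ i, (z i : ℝ) * v i) / s)))) atTop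
      (𝓝 (∑' z : Fin d → ℤ, a z * ((∑ i, (z i : ℝ) * v i) ^ 2 / 2))) := by
    have hbound := hvar.mul_right ((∑ i, v i ^ 2) / 2)
    refine tendsto_tsum_of_dominated_convergence hbound (fun z => ?_) ?_
    · exact (tendsto_sq_mul_one_sub_cos_div (∑ i, (z i : ℝ) * v i)).const_mul (a z)
    filter_upwards [eventually_gt_atTop 0] with s hs z
    rcases eq_or_ne z 0 with rfl | hz
    · simp
    · have h1 := sq_mul_one_sub_cos_div_le (∑ i, (z i : ℝ) * v i) hs.ne'
      have h2 := sum_intCast_mul_sq_le z v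
      have h3 : 0 ≤ 1 - Real.cos ((∑ i, (z i : ℝ) * v i) / s) :=
        sub_nonneg.2 (Real.cos_le_one _)
      have h4 := hpos z hz
      rw [Real.norm_eq_abs, abs_of_nonneg (by positivity)]
      calc a z * (s ^ 2 * (1 - Real.cos ((∑ i, (z i : ℝ) * v i) / s)))
          ≤ a z * ((∑ i, (z i : ℝ) ^ 2) * (∑ i, v i ^ 2) / 2) :=
            mul_le_mul_of_nonneg_left (h1.trans (div_le_div_of_nonneg_right h2 two_pos.le)) h4
        _ = _ := by ring
  refine h.neg.congr' ?_
  filter_upwards [eventually_gt_atTop 0] with s hs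
  have h1 := ((hasSum_neg_phiSymb hsum (s⁻¹ • v)).mul_left (s ^ 2)).tsum_eq
  rw [← neg_neg (phiSymb d a (s⁻¹ • v)), mul_neg, ← h1]
  refine congrArg Neg.neg <| tsum_congr fun z => ?_
  have : ∑ i, (z i : ℝ) * (s⁻¹ • v) i = (∑ i, (z i : ℝ) * v i) / s := by
    simp only [Pi.smul_apply, smul_eq_mul, Finset.sum_div]
    exact Finset.sum_congr rfl fun i _ => by ring
  rw [this]
  ring

lemma summable_mul_intCast_mul_intCast {d : ℕ} {a : (Fin d → ℤ) → ℝ}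
    (hpos : ∀ z : Fin d → ℤ, z ≠ 0 → 0 ≤ a z)
    (hvar : Summable fun z : Fin d → ℤ => (∑ i, ((z i : ℝ)) ^ 2) * a z) (i j : Fin d) :
    Summable fun z : Fin d → ℤ => a z * (z i : ℝ) * (z j : ℝ) := by
  refine Summable.of_norm_bounded hvar fun z => ?_
  rcases eq_or_ne z 0 with rfl | hz
  · simp
  · have hi := Finset.single_le_sum (f := fun i => (z i : ℝ) ^ 2)
      (fun i _ => sq_nonneg _) (Finset.mem_univ i)
    have hj := Finset.single_le_sum (f := fun i => (z i : ℝ) ^ 2)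
      (fun i _ => sq_nonneg _) (Finset.mem_univ j)
    have h : |(z i : ℝ) * z j| ≤ ∑ i, (z i : ℝ) ^ 2 := by
      rw [abs_mul]
      nlinarith [sq_abs (z i : ℝ), sq_abs (z j : ℝ), sq_nonneg (|(z i : ℝ)| - |(z j : ℝ)|)]
    rw [Real.norm_eq_abs, mul_assoc, abs_mul, abs_of_nonneg (hpos z hz), mul_comm]
    exact mul_le_mul_of_nonneg_right h (hpos z hz)

lemma dotProduct_neg_hessPhi_mulVec {d : ℕ} {a : (Fin d → ℤ) → ℝ}
    (hpos : ∀ z : Fin d → ℤ, z ≠ 0 → 0 ≤ a z)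
    (hvar : Summable fun z : Fin d → ℤ => (∑ i, ((z i : ℝ)) ^ 2) * a z) (v : Fin d → ℝ) :
    v ⬝ᵥ (-hessPhi d a).mulVec v = ∑' z : Fin d → ℤ, a z * (∑ i, (z i : ℝ) * v i) ^ 2 := by
  have h := hasSum_sum (s := Finset.univ) fun i _ => hasSum_sum (s := Finset.univ) fun j _ =>
    ((summable_mul_intCast_mul_intCast hpos hvar i j).hasSum.mul_left (v i)).mul_right (v j)
  have h2 : ∀ z : Fin d → ℤ, a z * (∑ i, (z i : ℝ) * v i) ^ 2
      = ∑ i, ∑ j, v i * (a z * (z i : ℝ) * (z j : ℝ)) * v j := fun z => by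
    rw [sq, Finset.sum_mul_sum, Finset.mul_sum]
    refine Finset.sum_congr rfl fun i _ => ?_
    rw [Finset.mul_sum]
    exact Finset.sum_congr rfl fun j _ => by ring
  rw [tsum_congr h2, h.tsum_eq]
  simp only [dotProduct, Matrix.mulVec, Matrix.neg_apply, hessPhi, Matrix.of_apply, neg_neg,
    Finset.mul_sum, mul_assoc]

lemma isHermitian_neg_hessPhi (d : ℕ) (a : (Fin d → ℤ) → ℝ) : (-hessPhi d a).IsHermitian := by
  refine Matrix.IsHermitian.ext fun i j => ?_
  simp only [Matrix.neg_apply, hessPhi, Matrix.of_apply, star_trivial]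
  congr 2
  exact tsum_congr fun z => by ring

open scoped MatrixOrder in
/-- The Gaussian integral associated with a positive definite matrix. -/
lemma Matrix.PosDef.integral_exp_neg_dotProduct_mulVec {d : ℕ} {M : Matrix (Fin d) (Fin d) ℝ}
    (hM : M.PosDef) :
    ∫ v : Fin d → ℝ, Real.exp (-(v ⬝ᵥ M.mulVec v / 2)) =
      (2 * π) ^ ((d : ℝ) / 2) * (Real.sqrt M.det)⁻¹ := by
  obtain ⟨L, hL⟩ := CStarAlgebra.nonneg_iff_eq_star_mul_self.mp hM.posSemidef.nonneg
  have hdet : M.det = L.det ^ 2 := by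
    rw [hL, Matrix.det_mul, Matrix.star_eq_conjTranspose, Matrix.det_conjTranspose, star_trivial, sq]
  have hL0 : L.det ≠ 0 := fun h => hM.det_pos.ne' (by simp [hdet, h])
  have hq : ∀ v : Fin d → ℝ, v ⬝ᵥ M.mulVec v = ∑ i, L.mulVec v i ^ 2 := fun v => by
    rw [hL, ← Matrix.mulVec_mulVec, Matrix.star_eq_conjTranspose,
      Matrix.conjTranspose_eq_transpose_of_trivial, Matrix.dotProduct_mulVec, Matrix.vecMul_transpose,
      dotProduct]
    exact Finset.sum_congr rfl fun i _ => (sq _).symm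
  have hdL : LinearMap.det (Matrix.toLin' L) ≠ 0 := by rwa [LinearMap.det_toLin']
  have hcont : Continuous fun v : Fin d → ℝ => Real.exp (-((∑ i, v i ^ 2) / 2)) := by fun_prop
  have hmap := Real.map_linearMap_volume_pi_eq_smul_volume_pi hdL
  have h1 : ∫ v : Fin d → ℝ, Real.exp (-(v ⬝ᵥ M.mulVec v / 2)) =
      ∫ v, Real.exp (-((∑ i, v i ^ 2) / 2)) ∂(Measure.map (Matrix.toLin' L) volume) := by
    rw [integral_map (LinearMap.continuous_of_finiteDimensional _).aemeasurable
      hcont.aestronglyMeasurable]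
    simp only [hq, Matrix.toLin'_apply]
  have h2 : ∀ v : Fin d → ℝ, Real.exp (-((∑ i, v i ^ 2) / 2)) =
      ∏ i, Real.exp (-(1 / 2) * v i ^ 2) := fun v => by
    rw [← Real.exp_sum, Finset.sum_div, ← Finset.sum_neg_distrib]
    congr 1
    exact Finset.sum_congr rfl fun i _ => by ring
  rw [h1, hmap, integral_smul_measure, LinearMap.det_toLin']
  simp only [h2]
  rw [integral_fintype_prod_volume_eq_pow (fun x : ℝ => Real.exp (-(1 / 2) * x ^ 2)),
    integral_gaussian, Fintype.card_fin, hdet, Real.sqrt_sq_eq_abs,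
    ENNReal.toReal_ofReal (abs_nonneg _), smul_eq_mul, abs_inv, mul_comm,
    show π / (1 / 2) = 2 * π by ring, Real.sqrt_eq_rpow, ← Real.rpow_natCast,
    ← Real.rpow_mul (by positivity)]
  congr 2
  ring

lemma integrable_exp_neg_mul_sum_sq {d : ℕ} {c : ℝ} (hc : 0 < c) :
    Integrable fun v : Fin d → ℝ => Real.exp (-c * ∑ i, v i ^ 2) := by
  have h := Integrable.fintype_prod (ι := Fin d) (fun _ => integrable_exp_neg_mul_sq hc)
  refine h.congr (ae_of_all _ fun v => ?_)
  simp only [Finset.mul_sum, Real.exp_sum]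

/-- The scaled symbol satisfies the same quadratic upper bound on the dilated torus. -/
lemma sq_mul_phiSymb_inv_smul_le {d : ℕ} {a : (Fin d → ℤ) → ℝ} {c : ℝ}
    (hc : ∀ θ ∈ Set.Icc (fun _ : Fin d => -π) (fun _ : Fin d => π),
      phiSymb d a θ ≤ -c * ∑ i, θ i ^ 2) {s : ℝ} (hs : 0 < s) {v : Fin d → ℝ}
    (hv : s⁻¹ • v ∈ Set.Icc (fun _ : Fin d => -π) (fun _ : Fin d => π)) :
    s ^ 2 * phiSymb d a (s⁻¹ • v) ≤ -c * ∑ i, v i ^ 2 := by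
  have h := mul_le_mul_of_nonneg_left (hc _ hv) (sq_nonneg s)
  refine h.trans_eq ?_
  simp only [Pi.smul_apply, smul_eq_mul, mul_pow, ← Finset.mul_sum]
  field_simp

lemma eventually_inv_smul_mem_Icc {d : ℕ} (v : Fin d → ℝ) :
    ∀ᶠ s : ℝ in atTop, s⁻¹ • v ∈ Set.Icc (fun _ : Fin d => -π) (fun _ : Fin d => π) := by
  have h : Tendsto (fun s : ℝ => s⁻¹ • v) atTop (𝓝 0) := by
    simpa using (tendsto_inv_atTop_zero (𝕜 := ℝ)).smul_const v
  refine h.eventually_mem ?_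
  rw [← Set.pi_univ_Icc]
  exact set_pi_mem_nhds Set.finite_univ fun i _ =>
    Icc_mem_nhds (by simpa using Real.pi_pos) (by simpa using Real.pi_pos)

lemma posDef_neg_hessPhi {d : ℕ} {a : (Fin d → ℤ) → ℝ}
    (hpos : ∀ z : Fin d → ℤ, z ≠ 0 → 0 ≤ a z) (hsum : HasSum a 0)
    (hvar : Summable fun z : Fin d → ℤ => (∑ i, ((z i : ℝ)) ^ 2) * a z)
    (hirr : AddSubgroup.closure {z : Fin d → ℤ | 0 < a z} = ⊤) :
    (-hessPhi d a).PosDef := by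
  refine Matrix.PosDef.of_dotProduct_mulVec_pos (isHermitian_neg_hessPhi d a) fun v hv => ?_
  obtain ⟨c, hc0, hc⟩ := exists_phiSymb_le_neg_mul_sq hpos hsum hirr
  have h1 := le_of_tendsto (tendsto_sq_mul_phiSymb hpos hsum hvar v) (b := -c * ∑ i, v i ^ 2) (by
    filter_upwards [eventually_inv_smul_mem_Icc v, eventually_gt_atTop 0] with s hs hs0
    exact sq_mul_phiSymb_inv_smul_le hc hs0 hs)
  have h2 : 0 < ∑ i, v i ^ 2 := by
    obtain ⟨i, hi⟩ := Function.ne_iff.1 hv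
    exact Finset.sum_pos' (fun i _ => sq_nonneg _) ⟨i, Finset.mem_univ i, sq_pos_of_ne_zero hi⟩
  rw [star_trivial, dotProduct_neg_hessPhi_mulVec hpos hvar]
  simp only [← mul_div_assoc, tsum_div_const] at h1
  nlinarith [mul_pos hc0 h2]

lemma continuous_ptrans {d : ℕ} {a : (Fin d → ℤ) → ℝ} (ha : Summable a) (x y : Fin d → ℤ) :
    Continuous fun t => ptrans d a t x y := by
  have h := continuous_phiSymb ha
  refine continuous_const.mul (continuous_parametric_integral_of_continuous ?_ isCompact_Icc)
  simp only [Function.uncurry_def]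
  fun_prop

/-- Local central limit theorem along `t = s ^ 2`. -/
lemma tendsto_pow_mul_ptrans_sq {d : ℕ} {a : (Fin d → ℤ) → ℝ}
    (hpos : ∀ z : Fin d → ℤ, z ≠ 0 → 0 ≤ a z) (hsum : HasSum a 0)
    (hvar : Summable fun z : Fin d → ℤ => (∑ i, ((z i : ℝ)) ^ 2) * a z)
    (hirr : AddSubgroup.closure {z : Fin d → ℤ | 0 < a z} = ⊤) (x y : Fin d → ℤ) :
    Tendsto (fun s : ℝ => s ^ d * ptrans d a (s ^ 2) x y) atTop (𝓝 (gammaConst d a)) := by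
  set T : Set (Fin d → ℝ) := Set.Icc (fun _ : Fin d => -π) (fun _ : Fin d => π) with hT
  set f : ℝ → (Fin d → ℝ) → ℝ := fun s θ =>
    T.indicator (fun θ => Real.exp (phiSymb d a θ * s ^ 2) *
      Real.cos (∑ i, θ i * ((y i : ℝ) - (x i : ℝ)))) θ with hf
  obtain ⟨c, hc0, hc⟩ := exists_phiSymb_le_neg_mul_sq hpos hsum hirr
  have hM := posDef_neg_hessPhi hpos hsum hvar hirr
  have hcont := continuous_phiSymb hsum.summable
  have hlim : Tendsto (fun s : ℝ => ∫ v, f s (s⁻¹ • v)) atTop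
      (𝓝 (∫ v : Fin d → ℝ, Real.exp (-(v ⬝ᵥ (-hessPhi d a).mulVec v / 2)))) := by
    refine tendsto_integral_filter_of_dominated_convergence
      (fun v => Real.exp (-c * ∑ i, v i ^ 2)) ?_ ?_ (integrable_exp_neg_mul_sum_sq hc0) ?_
    · refine Eventually.of_forall fun s => Measurable.aestronglyMeasurable ?_
      refine Measurable.comp (g := f s) ?_ (by fun_prop)
      refine Measurable.indicator (Continuous.measurable ?_) measurableSet_Icc
      fun_prop
    · filter_upwards [eventually_gt_atTop 0] with s hs
      refine ae_of_all _ fun v => ?_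
      by_cases hv : s⁻¹ • v ∈ T
      · simp only [hf, Set.indicator_of_mem hv, Real.norm_eq_abs, abs_mul, Real.abs_exp]
        refine (mul_le_of_le_one_right (Real.exp_pos _).le (Real.abs_cos_le_one _)).trans ?_
        rw [mul_comm]
        exact Real.exp_le_exp.2 (sq_mul_phiSymb_inv_smul_le hc hs hv)
      · simp only [hf, Set.indicator_of_notMem hv, norm_zero]
        positivity
    · refine ae_of_all _ fun v => ?_
      have h1 := (Real.continuous_exp.tendsto _).comp (tendsto_sq_mul_phiSymb hpos hsum hvar v)
      have h2 : Tendsto (fun s : ℝ => Real.cos (∑ i, (s⁻¹ • v) i * ((y i : ℝ) - (x i : ℝ))))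
          atTop (𝓝 1) := by
        have h3 : Continuous fun s : ℝ => Real.cos (∑ i, (s • v) i * ((y i : ℝ) - (x i : ℝ))) := by
          fun_prop
        have h4 := h3.tendsto 0
        simp only [zero_smul, Pi.zero_apply, zero_mul, Finset.sum_const_zero, Real.cos_zero] at h4
        exact h4.comp tendsto_inv_atTop_zero
      have h3 := h1.mul h2
      rw [mul_one] at h3
      rw [dotProduct_neg_hessPhi_mulVec hpos hvar, ← tsum_div_const]
      simp only [← mul_div_assoc] at h3
      refine h3.congr' ?_
      filter_upwards [eventually_inv_smul_mem_Icc v] with s hs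
      simp only [hf, Set.indicator_of_mem (show s⁻¹ • v ∈ T from hs), Function.comp, mul_comm]
  rw [hM.integral_exp_neg_dotProduct_mulVec] at hlim
  have hγ : ((2 * π) ^ d)⁻¹ * ((2 * π) ^ ((d : ℝ) / 2) * (Real.sqrt (-hessPhi d a).det)⁻¹)
      = gammaConst d a := by
    have h1 : (-hessPhi d a).det = |(hessPhi d a).det| := by
      rw [← abs_of_pos hM.det_pos, Matrix.det_neg, abs_mul]
      simp
    have h2 : ((2 * π) ^ d : ℝ) = (2 * π) ^ ((d : ℝ) / 2) * (2 * π) ^ ((d : ℝ) / 2) := by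
      rw [← Real.rpow_add (by positivity), add_halves, Real.rpow_natCast]
    rw [gammaConst, h1, h2]
    field_simp
  rw [← hγ]
  refine (hlim.const_mul _).congr' ?_
  filter_upwards [eventually_gt_atTop 0] with s hs
  rw [Measure.integral_comp_inv_smul, hf, integral_indicator measurableSet_Icc, ptrans,
    Module.finrank_fin_fun, abs_of_pos (by positivity), smul_eq_mul]
  ring

/-- Local central limit theorem. -/
lemma tendsto_rpow_mul_ptrans {d : ℕ} {a : (Fin d → ℤ) → ℝ}
    (hpos : ∀ z : Fin d → ℤ, z ≠ 0 → 0 ≤ a z) (hsum : HasSum a 0)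
    (hvar : Summable fun z : Fin d → ℤ => (∑ i, ((z i : ℝ)) ^ 2) * a z)
    (hirr : AddSubgroup.closure {z : Fin d → ℤ | 0 < a z} = ⊤) (x y : Fin d → ℤ) :
    Tendsto (fun t : ℝ => t ^ ((d : ℝ) / 2) * ptrans d a t x y) atTop (𝓝 (gammaConst d a)) := by
  refine ((tendsto_pow_mul_ptrans_sq hpos hsum hvar hirr x y).comp
    Real.tendsto_sqrt_atTop).congr' ?_
  filter_upwards [eventually_ge_atTop 0] with t ht
  rw [Function.comp, Real.sq_sqrt ht, Real.sqrt_eq_rpow, ← Real.rpow_natCast, ← Real.rpow_mul ht]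
  congr 2
  ring

lemma exists_abs_rpow_mul_le {p : ℝ → ℝ} (hp : Continuous p) {β γ : ℝ} (hβ : 1 < β)
    (hlim : Tendsto (fun t => t ^ β * p t) atTop (𝓝 γ)) :
    ∃ C, ∀ t, 0 ≤ t → |t ^ β * p t| ≤ C := by
  obtain ⟨T, hT⟩ := eventually_atTop.1 (hlim.abs.eventually_le_const (lt_add_one |γ|))
  have hcont : Continuous fun t => t ^ β * p t :=
    (Real.continuous_rpow_const (by linarith)).mul hp
  obtain ⟨C, hC⟩ := isCompact_Icc.exists_bound_of_continuousOn (s := Set.Icc 0 T) hcont.continuousOn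
  refine ⟨max C (|γ| + 1), fun t ht => ?_⟩
  rcases le_total t T with h | h
  · exact (hC t ⟨ht, h⟩).trans (le_max_left _ _)
  · exact (hT t h).trans (le_max_right _ _)

lemma integrableOn_Ioi_of_tendsto_rpow_mul {p : ℝ → ℝ} (hp : Continuous p) {β γ : ℝ} (hβ : 1 < β)
    (hlim : Tendsto (fun t => t ^ β * p t) atTop (𝓝 γ)) (s : ℝ) :
    IntegrableOn p (Set.Ioi s) := by
  obtain ⟨C, hC⟩ := exists_abs_rpow_mul_le hp hβ hlim
  have h1 : IntegrableOn p (Set.Ioi (max s 1)) := by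
    have hT : 0 < max s 1 := lt_max_of_lt_right one_pos
    refine Integrable.mono' ((integrableOn_Ioi_rpow_of_lt (neg_lt_neg hβ) hT).const_mul C)
      hp.aestronglyMeasurable ?_
    filter_upwards [ae_restrict_mem measurableSet_Ioi] with t ht
    have ht0 : 0 < t := hT.trans ht
    have h := hC t ht0.le
    rw [abs_mul, abs_of_pos (Real.rpow_pos_of_pos ht0 _)] at h
    rw [Real.rpow_neg ht0.le, ← div_eq_mul_inv, le_div_iff₀ (Real.rpow_pos_of_pos ht0 _), mul_comm]
    exact h
  rw [← Set.Ioc_union_Ioi_eq_Ioi (le_max_left s 1)]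
  exact (hp.integrableOn_Ioc).union h1

lemma hasDerivAt_integral_Ioi {p : ℝ → ℝ} (hp : Continuous p)
    (hint : ∀ s, IntegrableOn p (Set.Ioi s)) (s : ℝ) :
    HasDerivAt (fun s => ∫ t in Set.Ioi s, p t) (-p s) s := by
  have h : (fun s => ∫ t in Set.Ioi s, p t) = fun s => (∫ t in Set.Ioi 0, p t) - ∫ t in 0..s, p t := by
    funext s
    rw [← intervalIntegral.integral_interval_add_Ioi (hint 0) (hint s)]
    ring
  rw [h]
  exact ((hp.integral_hasStrictDerivAt 0 s).hasDerivAt).const_sub _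

lemma abs_integral_Ioi_le {p : ℝ → ℝ} (hint : IntegrableOn p (Set.Ioi 0)) {s : ℝ} (hs : 0 ≤ s) :
    |∫ t in Set.Ioi s, p t| ≤ ∫ t in Set.Ioi 0, |p t| :=
  (abs_integral_le_integral_abs).trans
    (setIntegral_mono_set hint.abs (ae_of_all _ fun _ => abs_nonneg _)
      (Set.Ioi_subset_Ioi hs).eventuallyLE)

lemma rpow_mul_integral_Ioi_eq {p : ℝ → ℝ} {β s : ℝ} (hs : 0 < s) :
    s ^ (β - 1) * ∫ t in Set.Ioi s, p t =
      ∫ u in Set.Ioi (1 : ℝ), u ^ (-β) * ((s * u) ^ β * p (s * u)) := by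
  have h := integral_comp_mul_left_Ioi p 1 hs
  rw [mul_one, smul_eq_mul, eq_comm, inv_mul_eq_iff_eq_mul₀ hs.ne'] at h
  rw [h, ← mul_assoc, ← Real.rpow_add_one hs.ne', sub_add_cancel, ← integral_const_mul]
  refine setIntegral_congr_fun measurableSet_Ioi fun u hu => ?_
  have hu0 : 0 < u := one_pos.trans hu
  rw [Real.mul_rpow hs.le hu0.le, Real.rpow_neg hu0.le]
  have := (Real.rpow_pos_of_pos hu0 β).ne'
  field_simp

lemma exists_abs_rpow_mul_integral_Ioi_le {p : ℝ → ℝ} (hp : Continuous p) {β γ : ℝ} (hβ : 1 < β)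
    (hlim : Tendsto (fun t => t ^ β * p t) atTop (𝓝 γ)) :
    ∃ D, ∀ s, 0 < s → |s ^ (β - 1) * ∫ t in Set.Ioi s, p t| ≤ D := by
  obtain ⟨C, hC⟩ := exists_abs_rpow_mul_le hp hβ hlim
  refine ⟨∫ u in Set.Ioi (1 : ℝ), u ^ (-β) * C, fun s hs => ?_⟩
  rw [rpow_mul_integral_Ioi_eq hs, ← Real.norm_eq_abs]
  refine norm_integral_le_of_norm_le
    ((integrableOn_Ioi_rpow_of_lt (neg_lt_neg hβ) one_pos).mul_const C) ?_
  filter_upwards [ae_restrict_mem measurableSet_Ioi] with u hu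
  have hu0 : 0 < u := one_pos.trans hu
  rw [Real.norm_eq_abs, abs_mul, abs_of_pos (Real.rpow_pos_of_pos hu0 _)]
  exact mul_le_mul_of_nonneg_left (hC _ (by positivity)) (Real.rpow_pos_of_pos hu0 _).le

lemma tendsto_rpow_mul_integral_Ioi {p : ℝ → ℝ} (hp : Continuous p) {β γ : ℝ} (hβ : 1 < β)
    (hlim : Tendsto (fun t => t ^ β * p t) atTop (𝓝 γ)) :
    Tendsto (fun s => s ^ (β - 1) * ∫ t in Set.Ioi s, p t) atTop (𝓝 (γ / (β - 1))) := by
  obtain ⟨C, hC⟩ := exists_abs_rpow_mul_le hp hβ hlim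
  have hcont : Continuous fun t => t ^ β * p t :=
    (Real.continuous_rpow_const (by linarith)).mul hp
  have hγ : ∫ u in Set.Ioi (1 : ℝ), u ^ (-β) * γ = γ / (β - 1) := by
    rw [integral_mul_const, integral_Ioi_rpow_of_lt (neg_lt_neg hβ) one_pos, Real.one_rpow,
      show -β + 1 = -(β - 1) by ring, neg_div_neg_eq]
    ring
  rw [← hγ]
  have h : Tendsto (fun s => ∫ u in Set.Ioi (1 : ℝ), u ^ (-β) * ((s * u) ^ β * p (s * u))) atTop
      (𝓝 (∫ u in Set.Ioi (1 : ℝ), u ^ (-β) * γ)) := by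
    refine tendsto_integral_filter_of_dominated_convergence (fun u => u ^ (-β) * C) ?_ ?_
      ((integrableOn_Ioi_rpow_of_lt (neg_lt_neg hβ) one_pos).mul_const C) ?_
    · refine Eventually.of_forall fun s => Measurable.aestronglyMeasurable ?_
      exact (measurable_id.pow_const _).mul (hcont.comp (continuous_const.mul continuous_id)).measurable
    · filter_upwards [eventually_gt_atTop 0] with s hs
      filter_upwards [ae_restrict_mem measurableSet_Ioi] with u hu
      have hu0 : 0 < u := one_pos.trans hu
      rw [Real.norm_eq_abs, abs_mul, abs_of_pos (Real.rpow_pos_of_pos hu0 _)]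
      exact mul_le_mul_of_nonneg_left (hC _ (by positivity)) (Real.rpow_pos_of_pos hu0 _).le
    · filter_upwards [ae_restrict_mem measurableSet_Ioi] with u hu
      have hu0 : 0 < u := one_pos.trans hu
      exact (hlim.comp (tendsto_id.atTop_mul_const hu0)).const_mul _
  refine h.congr' ?_
  filter_upwards [eventually_gt_atTop 0] with s hs
  exact (rpow_mul_integral_Ioi_eq hs).symm

lemma integrableOn_pow_mul_exp_neg_mul (n : ℕ) {b : ℝ} (hb : 0 < b) :
    IntegrableOn (fun s : ℝ => s ^ n * Real.exp (-b * s)) (Set.Ioi 0) := by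
  have hn : (-1 : ℝ) < n := neg_one_lt_zero.trans_le n.cast_nonneg
  simpa using integrableOn_rpow_mul_exp_neg_mul_rpow (s := n) hn one_pos hb

lemma integrableOn_pow_mul_exp_neg_mul_mul {q : ℝ → ℝ} (hq : Continuous q) {M : ℝ}
    (hM : ∀ s, 0 < s → |q s| ≤ M) (n : ℕ) {b : ℝ} (hb : 0 < b) :
    IntegrableOn (fun s : ℝ => s ^ n * Real.exp (-b * s) * q s) (Set.Ioi 0) := by
  refine Integrable.mul_bdd (c := M) (integrableOn_pow_mul_exp_neg_mul n hb) hq.aestronglyMeasurable ?_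
  filter_upwards [ae_restrict_mem measurableSet_Ioi] with s hs using hM s hs

lemma hasDerivAt_laplace {q : ℝ → ℝ} (hq : Continuous q) {M : ℝ}
    (hM : ∀ s, 0 < s → |q s| ≤ M) (n : ℕ) {b : ℝ} (hb : 0 < b) :
    HasDerivAt (fun b => ∫ s in Set.Ioi (0 : ℝ), s ^ n * Real.exp (-b * s) * q s)
      (-∫ s in Set.Ioi (0 : ℝ), s ^ (n + 1) * Real.exp (-b * s) * q s) b := by
  rw [← integral_neg]
  refine (hasDerivAt_integral_of_dominated_loc_of_deriv_le
    (bound := fun s => s ^ (n + 1) * Real.exp (-(b / 2) * s) * M)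
    (Ioi_mem_nhds (half_lt_self hb)) (Eventually.of_forall fun x => ?_)
    (integrableOn_pow_mul_exp_neg_mul_mul hq hM n hb)
    (F := fun b s => s ^ n * Real.exp (-b * s) * q s)
    (F' := fun b s => -(s ^ (n + 1) * Real.exp (-b * s) * q s)) ?_ ?_ ?_ ?_).2
  · exact Continuous.aestronglyMeasurable (by fun_prop)
  · exact Continuous.aestronglyMeasurable (by fun_prop)
  · filter_upwards [ae_restrict_mem measurableSet_Ioi] with s hs x hx
    have hs : 0 < s := hs
    have hx : b / 2 < x := hx
    rw [norm_neg, Real.norm_eq_abs, abs_mul, abs_mul, Real.abs_exp, abs_of_pos (pow_pos hs _)]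
    have := hM s hs
    gcongr
  · exact (integrableOn_pow_mul_exp_neg_mul (n + 1) (half_pos hb)).mul_const M
  · refine ae_of_all _ fun s x _ => ?_
    have h := ((((hasDerivAt_id x).neg.mul_const s).exp).const_mul (s ^ n)).mul_const (q s)
    refine h.congr_deriv ?_
    simp only [id, Pi.neg_apply]
    ring

lemma iteratedDeriv_laplace {q : ℝ → ℝ} (hq : Continuous q) {M : ℝ}
    (hM : ∀ s, 0 < s → |q s| ≤ M) (n : ℕ) {b : ℝ} (hb : 0 < b) :
    iteratedDeriv n (fun b => ∫ s in Set.Ioi (0 : ℝ), Real.exp (-b * s) * q s) b =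
      (-1) ^ n * ∫ s in Set.Ioi (0 : ℝ), s ^ n * Real.exp (-b * s) * q s := by
  induction n generalizing b with
  | zero => simp
  | succ n ih =>
    have h : iteratedDeriv n (fun b => ∫ s in Set.Ioi (0 : ℝ), Real.exp (-b * s) * q s) =ᶠ[𝓝 b]
        fun b => (-1) ^ n * ∫ s in Set.Ioi (0 : ℝ), s ^ n * Real.exp (-b * s) * q s := by
      filter_upwards [Ioi_mem_nhds hb] with x hx using ih hx
    rw [iteratedDeriv_succ, h.deriv_eq, ((hasDerivAt_laplace hq hM n hb).const_mul _).deriv]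
    ring

/-- Integration by parts: the difference quotient of the Laplace transform of `p` at `0` is the
Laplace transform of the tail of `p`. -/
lemma laplace_diff_div_eq {p : ℝ → ℝ} (hp : Continuous p)
    (hint : ∀ s, IntegrableOn p (Set.Ioi s)) {b : ℝ} (hb : 0 < b) :
    ((∫ t in Set.Ioi (0 : ℝ), p t) - ∫ t in Set.Ioi (0 : ℝ), Real.exp (-b * t) * p t) / b =
      ∫ s in Set.Ioi (0 : ℝ), Real.exp (-b * s) * ∫ t in Set.Ioi s, p t := by
  set q : ℝ → ℝ := fun s => ∫ t in Set.Ioi s, p t with hqdef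
  have hqd : ∀ s, HasDerivAt q (-p s) s := hasDerivAt_integral_Ioi hp hint
  have hq : Continuous q := continuous_iff_continuousAt.2 fun s => (hqd s).continuousAt
  have hqM : ∀ s, 0 < s → |q s| ≤ ∫ t in Set.Ioi 0, |p t| := fun s hs =>
    abs_integral_Ioi_le (hint 0) hs.le
  have hexp : ∀ s ∈ Set.Ioi (0 : ℝ), ‖Real.exp (-b * s)‖ ≤ 1 := fun s hs => by
    rw [Real.norm_eq_abs, Real.abs_exp, Real.exp_le_one_iff]
    nlinarith [mul_pos hb hs]
  have hpe : IntegrableOn (fun t => Real.exp (-b * t) * p t) (Set.Ioi 0) := by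
    refine Integrable.bdd_mul (c := 1) (hint 0) (Continuous.aestronglyMeasurable (by fun_prop)) ?_
    filter_upwards [ae_restrict_mem measurableSet_Ioi] with s hs using hexp s hs
  set u : ℝ → ℝ := fun t => (1 - Real.exp (-b * t)) / b with hu
  have hud : ∀ t, HasDerivAt u (Real.exp (-b * t)) t := fun t => by
    have h := ((((hasDerivAt_id t).const_mul (-b)).exp).const_sub 1).div_const b
    refine h.congr_deriv ?_
    simp only [id]
    field_simp
  have huc : Continuous u := continuous_iff_continuousAt.2 fun s => (hud s).continuousAt
  have hleft : ((∫ t in Set.Ioi (0 : ℝ), p t) - ∫ t in Set.Ioi (0 : ℝ), Real.exp (-b * t) * p t) / b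
      = -∫ t in Set.Ioi (0 : ℝ), u t * -p t := by
    rw [← integral_sub (hint 0) hpe, ← integral_div, ← integral_neg]
    congr 1
    funext t
    simp only [hu]
    ring
  have hq0 : Tendsto q atTop (𝓝 0) := tendsto_integral_Ioi_zero tendsto_id
  have hulim : Tendsto u atTop (𝓝 ((1 - 0) / b)) := by
    refine (Tendsto.const_sub 1 ?_).div_const b
    refine Real.tendsto_exp_atBot.comp ?_
    exact tendsto_id.const_mul_atTop_of_neg (neg_neg_of_pos hb)
  have hparts := integral_Ioi_mul_deriv_eq_deriv_mul (a := 0) (a' := 0) (b' := 0)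
    (fun t _ => hud t) (fun t _ => hqd t) ?_ ?_ ?_ ?_
  · rw [hleft, hparts]
    ring
  · have h : u * (fun t => -p t) = fun t => (Real.exp (-b * t) * p t - p t) / b := by
      funext t
      simp only [hu, Pi.mul_apply]
      ring
    rw [h]
    exact (hpe.sub (hint 0)).div_const b
  · simpa using! integrableOn_pow_mul_exp_neg_mul_mul hq hqM 0 hb
  · have h := ((huc.mul hq).tendsto 0).mono_left (nhdsWithin_le_nhds (s := Set.Ioi 0))
    simpa [hu] using! h
  · simpa using! hulim.mul hq0

/-- Abelian theorem: the Laplace transform of a function asymptotic to `c * s ^ (-α)`. -/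
lemma tendsto_rpow_mul_laplace {f g : ℝ → ℝ} {α c D : ℝ} (hα : α < 1) (hg : Measurable g)
    (hgD : ∀ s, 0 < s → |g s| ≤ D) (hlim : Tendsto g atTop (𝓝 c))
    (hfg : ∀ s, 0 < s → f s = s ^ (-α) * g s) :
    Tendsto (fun b : ℝ => b ^ (1 - α) * ∫ s in Set.Ioi (0 : ℝ), Real.exp (-b * s) * f s)
      (𝓝[>] 0) (𝓝 (c * Real.Gamma (1 - α))) := by
  have hΓ : IntegrableOn (fun u : ℝ => Real.exp (-u) * u ^ (-α)) (Set.Ioi 0) := by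
    have h := Real.GammaIntegral_convergent (sub_pos.2 hα)
    rwa [show 1 - α - 1 = -α by ring] at h
  have h : Tendsto (fun b : ℝ => ∫ u in Set.Ioi (0 : ℝ), Real.exp (-u) * u ^ (-α) * g (u * b⁻¹))
      (𝓝[>] 0) (𝓝 (∫ u in Set.Ioi (0 : ℝ), Real.exp (-u) * u ^ (-α) * c)) := by
    refine tendsto_integral_filter_of_dominated_convergence
      (fun u => Real.exp (-u) * u ^ (-α) * D) ?_ ?_ (hΓ.mul_const D) ?_
    · exact Eventually.of_forall fun b => Measurable.aestronglyMeasurable (by fun_prop)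
    · filter_upwards [self_mem_nhdsWithin] with b hb
      have hb : 0 < b := hb
      filter_upwards [ae_restrict_mem measurableSet_Ioi] with u hu
      have hu : 0 < u := hu
      have h1 : 0 ≤ Real.exp (-u) * u ^ (-α) := by positivity
      rw [Real.norm_eq_abs, abs_mul, abs_of_nonneg h1]
      exact mul_le_mul_of_nonneg_left (hgD _ (by positivity)) h1
    · filter_upwards [ae_restrict_mem measurableSet_Ioi] with u hu
      exact (hlim.comp (tendsto_inv_nhdsGT_zero.const_mul_atTop hu)).const_mul _
  rw [integral_mul_const, mul_comm] at h
  rw [Real.Gamma_eq_integral (sub_pos.2 hα), show 1 - α - 1 = -α by ring]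
  refine h.congr' ?_
  filter_upwards [self_mem_nhdsWithin] with b hb
  have hb : 0 < b := hb
  have h1 := integral_comp_mul_left_Ioi (fun u => Real.exp (-u) * f (u * b⁻¹)) 0 hb
  have h2 : ∀ s : ℝ, b * s * b⁻¹ = s := fun s => by field_simp
  simp only [h2, mul_zero, smul_eq_mul, ← neg_mul] at h1
  rw [h1, ← mul_assoc, ← div_eq_mul_inv, ← Real.rpow_sub_one hb.ne', ← integral_const_mul]
  refine setIntegral_congr_fun measurableSet_Ioi fun u hu => ?_
  have hu : 0 < u := hu
  rw [hfg _ (by positivity), Real.mul_rpow hu.le (by positivity), Real.inv_rpow hb.le,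
    show 1 - α - 1 = -α by ring]
  have := (Real.rpow_pos_of_pos hb (-α)).ne'
  field_simp

/-- If `t ^ β * p t → γ` then the `n`-th derivative of the difference quotient at `0` of the Laplace
transform of `p` is asymptotic to a power, provided `n > β - 2`. -/
lemma tendsto_rpow_mul_iteratedDeriv_laplace_diff_div {p : ℝ → ℝ} (hp : Continuous p) {α β γ : ℝ}
    (hβ : 1 < β) (hα : α < 1) {n : ℕ} (hn : α + n = β - 1)
    (hlim : Tendsto (fun t => t ^ β * p t) atTop (𝓝 γ)) :
    Tendsto (fun b : ℝ => b ^ (1 - α) * ((-1 : ℝ) ^ n * iteratedDeriv n (fun b : ℝ =>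
        ((∫ t in Set.Ioi (0 : ℝ), p t) - ∫ t in Set.Ioi (0 : ℝ), Real.exp (-b * t) * p t) / b) b))
      (𝓝[>] 0) (𝓝 (γ / (β - 1) * Real.Gamma (1 - α))) := by
  have hint := integrableOn_Ioi_of_tendsto_rpow_mul hp hβ hlim
  set q : ℝ → ℝ := fun s => ∫ t in Set.Ioi s, p t with hqdef
  have hq : Continuous q :=
    continuous_iff_continuousAt.2 fun s => (hasDerivAt_integral_Ioi hp hint s).continuousAt
  obtain ⟨D, hD⟩ := exists_abs_rpow_mul_integral_Ioi_le hp hβ hlim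
  have h := tendsto_rpow_mul_laplace (f := fun s => s ^ n * q s) hα
    ((measurable_id.pow_const (β - 1)).mul hq.measurable) hD
    (tendsto_rpow_mul_integral_Ioi hp hβ hlim) fun s hs => by
      simp only [Pi.mul_apply, id]
      rw [← mul_assoc, ← Real.rpow_add hs, ← hn, neg_add_cancel_left, Real.rpow_natCast]
  refine h.congr' ?_
  filter_upwards [self_mem_nhdsWithin] with b hb
  have hEq : (fun b : ℝ => ((∫ t in Set.Ioi (0 : ℝ), p t) -
      ∫ t in Set.Ioi (0 : ℝ), Real.exp (-b * t) * p t) / b) =ᶠ[𝓝 b]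
      fun b => ∫ s in Set.Ioi (0 : ℝ), Real.exp (-b * s) * q s := by
    filter_upwards [Ioi_mem_nhds hb] with x hx using laplace_diff_div_eq hp hint hx
  rw [hEq.iteratedDeriv_eq, iteratedDeriv_laplace hq
    (fun s hs => abs_integral_Ioi_le (hint 0) hs.le) n hb, ← mul_assoc ((-1 : ℝ) ^ n),
    ← mul_pow, neg_one_mul, neg_neg, one_pow, one_mul]
  congr 2
  funext s
  ring

/-- For `d ≥ 3`, `m = ⌊d/2⌋ - 1`, `K_d(λ;r) = (G_0(0,r) - G_λ(0,r))/λ`, one has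
`(-1)^m K_d^{(m)}(λ;r) ~ 2γ_d√π/((d-2)√λ)` (d odd) and `~ 2γ_d/((d-2)λ)` (d even),
as `λ → 0+`. -/
theorem K_deriv_asymptotic
    (d : ℕ) (hd : 1 ≤ d) (a : (Fin d → ℤ) → ℝ)
    (hpos : ∀ z : Fin d → ℤ, z ≠ 0 → 0 ≤ a z)
    (hneg : a 0 < 0)
    (hsymm : ∀ z : Fin d → ℤ, a (-z) = a z)
    (hsum : HasSum a 0)
    (hvar : Summable fun z : Fin d → ℤ => (∑ i, ((z i : ℝ)) ^ 2) * a z)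
    (hirr : AddSubgroup.closure {z : Fin d → ℤ | 0 < a z} = ⊤)
    (hd3 : 3 ≤ d) (r : Fin d → ℤ) :
    (Odd d →
      Tendsto (fun lam : ℝ => Real.sqrt lam *
          ((-1 : ℝ) ^ (d / 2 - 1) *
            iteratedDeriv (d / 2 - 1)
              (fun mu : ℝ => (Glam d a 0 0 r - Glam d a mu 0 r) / mu) lam))
        (𝓝[>] (0 : ℝ)) (𝓝 (2 * gammaConst d a * Real.sqrt π / ((d : ℝ) - 2)))) ∧
    (Even d →
      Tendsto (fun lam : ℝ => lam *
          ((-1 : ℝ) ^ (d / 2 - 1) *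
            iteratedDeriv (d / 2 - 1)
              (fun mu : ℝ => (Glam d a 0 0 r - Glam d a mu 0 r) / mu) lam))
        (𝓝[>] (0 : ℝ)) (𝓝 (2 * gammaConst d a / ((d : ℝ) - 2)))) := by
  have hβ : (1 : ℝ) < (d : ℝ) / 2 := by
    have : (3 : ℝ) ≤ d := by exact_mod_cast hd3
    linarith
  have hlim := tendsto_rpow_mul_ptrans hpos hsum hvar hirr 0 r
  have hp := continuous_ptrans hsum.summable 0 r
  have hK : (fun mu : ℝ => (Glam d a 0 0 r - Glam d a mu 0 r) / mu) = fun b : ℝ =>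
      ((∫ t in Set.Ioi (0 : ℝ), ptrans d a t 0 r) -
        ∫ t in Set.Ioi (0 : ℝ), Real.exp (-b * t) * ptrans d a t 0 r) / b := by
    funext b
    simp [Glam]
  have hc : gammaConst d a / ((d : ℝ) / 2 - 1) = 2 * gammaConst d a / ((d : ℝ) - 2) := by
    rw [div_sub_one (two_ne_zero), div_div_eq_mul_div, mul_comm]
  rw [hK]
  constructor
  · rintro ⟨k, rfl⟩
    have hk : 1 ≤ k := by lia
    have hn : (1 / 2 : ℝ) + (((2 * k + 1) / 2 - 1 : ℕ) : ℝ) = ((2 * k + 1 : ℕ) : ℝ) / 2 - 1 := by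
      rw [show (2 * k + 1) / 2 - 1 = k - 1 by lia, Nat.cast_sub hk]
      push_cast
      ring
    have h := tendsto_rpow_mul_iteratedDeriv_laplace_diff_div hp hβ (by norm_num) hn hlim
    rw [hc, show (1 : ℝ) - 1 / 2 = 1 / 2 by norm_num, Real.Gamma_one_half_eq, div_mul_eq_mul_div] at h
    simpa only [← Real.sqrt_eq_rpow] using h
  · rintro ⟨k, rfl⟩
    have hk : 1 ≤ k := by lia
    have hn : (0 : ℝ) + (((k + k) / 2 - 1 : ℕ) : ℝ) = ((k + k : ℕ) : ℝ) / 2 - 1 := by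
      rw [show (k + k) / 2 - 1 = k - 1 by lia, Nat.cast_sub hk]
      push_cast
      ring
    have h := tendsto_rpow_mul_iteratedDeriv_laplace_diff_div hp hβ zero_lt_one hn hlim
    simpa only [hc, sub_zero, Real.Gamma_one, mul_one, Real.rpow_one] using h
end

section
/- Let d ≥ 3 and let x, y ∈ ℤ^d with y ≠ 0, x ≠ 0 and x ≠ y. Then lim_{λ→0+} (G_λ(x, y) G_λ(0, 0) - G_λ(0, x) G_λ(0, y)) / (G_λ(0, 0)² - G_λ(0, y)²) = (G_0(0, 0) ρ_d(y) - G_0(0, 0) ρ_d(y - x) + G_0(0, y) ρ_d(x)) / (ρ_d(y) (G_0(0, 0) + G_0(0, y))). (This limit is the total mass H_{x,y,0}(∞) of the taboo hitting-time distribution, since the quotient is its Laplace–Stieltjes transform.) -/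
open MeasureTheory Real Filter Topology Asymptotics

namespace LatticeWalk

variable {d : ℕ} {a : (Fin d → ℤ) → ℝ}

/-- The cube `[-π, π]^d`. -/
abbrev cube (d : ℕ) : Set (Fin d → ℝ) := Set.Icc (fun _ => -π) (fun _ => π)

lemma continuous_phiSymb (ha : Summable a) : Continuous (phiSymb d a) := by
  refine continuous_tsum (fun z => by fun_prop) ha.abs fun z θ => ?_
  rw [norm_mul]
  exact mul_le_of_le_one_right (norm_nonneg _) (abs_cos_le_one _)

lemma hasSum_neg_phiSymb (hsum : HasSum a 0) (θ : Fin d → ℝ) :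
    HasSum (fun z => 2 * a z * sin ((∑ i, (z i : ℝ) * θ i) / 2) ^ 2) (-phiSymb d a θ) := by
  have hs : Summable fun z : Fin d → ℤ => a z * cos (∑ i, (z i : ℝ) * θ i) := by
    refine hsum.summable.abs.of_norm_bounded fun z => ?_
    rw [norm_mul]
    exact mul_le_of_le_one_right (norm_nonneg _) (abs_cos_le_one _)
  convert! hsum.sub hs.hasSum using 1
  · ext z
    rw [sin_sq_eq_half_sub, mul_div_cancel₀ _ (two_ne_zero)]
    ring
  · simp [phiSymb]

lemma term_le_neg_phiSymb (hpos : ∀ z : Fin d → ℤ, z ≠ 0 → 0 ≤ a z) (hsum : HasSum a 0)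
    (θ : Fin d → ℝ) (z : Fin d → ℤ) :
    2 * a z * sin ((∑ i, (z i : ℝ) * θ i) / 2) ^ 2 ≤ -phiSymb d a θ := by
  refine le_hasSum (hasSum_neg_phiSymb hsum θ) z fun w _ => ?_
  rcases eq_or_ne w 0 with rfl | hw
  · simp
  · have := hpos w hw
    positivity

/-- Irreducibility bounds every `sin²(⟨z, θ⟩ / 2)` by a multiple of `-φ(θ)`. -/
lemma exists_sin_sq_le (hpos : ∀ z : Fin d → ℤ, z ≠ 0 → 0 ≤ a z) (hsum : HasSum a 0)
    (hirr : AddSubgroup.closure {z : Fin d → ℤ | 0 < a z} = ⊤) (z : Fin d → ℤ) :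
    ∃ C : ℝ, ∀ θ : Fin d → ℝ, sin ((∑ i, (z i : ℝ) * θ i) / 2) ^ 2 ≤ C * -phiSymb d a θ := by
  have hz : z ∈ AddSubgroup.closure {z : Fin d → ℤ | 0 < a z} := hirr ▸ AddSubgroup.mem_top z
  induction hz using AddSubgroup.closure_induction with
  | mem z hz =>
    replace hz : 0 < a z := hz
    refine ⟨(2 * a z)⁻¹, fun θ => ?_⟩
    rw [inv_mul_eq_div, le_div_iff₀' (by positivity)]
    exact term_le_neg_phiSymb hpos hsum θ z
  | zero => exact ⟨0, by simp⟩
  | add v w _ _ hv hw =>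
    obtain ⟨C, hC⟩ := hv
    obtain ⟨D, hD⟩ := hw
    refine ⟨2 * (C + D), fun θ => ?_⟩
    have hadd : (∑ i, ((v + w) i : ℝ) * θ i) / 2 =
        (∑ i, (v i : ℝ) * θ i) / 2 + (∑ i, (w i : ℝ) * θ i) / 2 := by
      simp [add_mul, Finset.sum_add_distrib, add_div]
    have key (u s : ℝ) : sin (u + s) ^ 2 ≤ 2 * (sin u ^ 2 + sin s ^ 2) := by
      rw [sin_add]
      nlinarith [sq_nonneg (sin u * cos s - cos u * sin s), sq_nonneg (sin u * sin s),
        sin_sq_add_cos_sq u, sin_sq_add_cos_sq s]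
    rw [hadd]
    linarith [key ((∑ i, (v i : ℝ) * θ i) / 2) ((∑ i, (w i : ℝ) * θ i) / 2), hC θ, hD θ]
  | neg v _ hv =>
    obtain ⟨C, hC⟩ := hv
    refine ⟨C, fun θ => ?_⟩
    simpa [neg_div] using hC θ

lemma exists_norm_sq_le (hpos : ∀ z : Fin d → ℤ, z ≠ 0 → 0 ≤ a z) (hsum : HasSum a 0)
    (hirr : AddSubgroup.closure {z : Fin d → ℤ | 0 < a z} = ⊤) :
    ∃ C : ℝ, ∀ θ ∈ cube d, ‖θ‖ ^ 2 ≤ C * -phiSymb d a θ := by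
  choose C hC using fun i : Fin d => exists_sin_sq_le hpos hsum hirr (Pi.single i 1)
  have hφ (θ : Fin d → ℝ) : 0 ≤ -phiSymb d a θ := by
    simpa using term_le_neg_phiSymb hpos hsum θ 0
  refine ⟨∑ i, π ^ 2 * |C i|, fun θ hθ => ?_⟩
  have hcoord (i : Fin d) : ‖θ i‖ ^ 2 ≤ (∑ i, π ^ 2 * |C i|) * -phiSymb d a θ := by
    have hi : |θ i| ≤ π := abs_le.2 ⟨hθ.1 i, hθ.2 i⟩
    have h1 : 2 / π * |θ i / 2| ≤ |sin (θ i / 2)| := by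
      refine mul_abs_le_abs_sin ?_
      rw [abs_div, abs_two]
      linarith
    have h2 : |θ i| ≤ π * |sin (θ i / 2)| := by
      rw [abs_div, abs_two] at h1
      calc |θ i| = π * (2 / π * (|θ i| / 2)) := by field_simp
        _ ≤ _ := by gcongr
    have h3 : sin (θ i / 2) ^ 2 ≤ C i * -phiSymb d a θ := by
      simpa [Pi.single_apply] using hC i θ
    calc ‖θ i‖ ^ 2 ≤ (π * |sin (θ i / 2)|) ^ 2 := by rw [Real.norm_eq_abs]; gcongr
      _ = π ^ 2 * sin (θ i / 2) ^ 2 := by rw [mul_pow, sq_abs]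
      _ ≤ π ^ 2 * (C i * -phiSymb d a θ) := by gcongr
      _ ≤ π ^ 2 * (|C i| * -phiSymb d a θ) := by
        gcongr
        · exact hφ θ
        · exact le_abs_self _
      _ = π ^ 2 * |C i| * -phiSymb d a θ := by ring
      _ ≤ _ := by
        refine mul_le_mul_of_nonneg_right ?_ (hφ θ)
        exact Finset.single_le_sum (f := fun i => π ^ 2 * |C i|) (fun j _ => by positivity)
          (Finset.mem_univ i)
  have hK : 0 ≤ (∑ i, π ^ 2 * |C i|) * -phiSymb d a θ :=
    mul_nonneg (Finset.sum_nonneg fun i _ => by positivity) (hφ θ)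
  rw [← Real.le_sqrt (norm_nonneg _) hK, pi_norm_le_iff_of_nonneg (Real.sqrt_nonneg _)]
  exact fun i => Real.le_sqrt_of_sq_le (hcoord i)

lemma phiSymb_neg (hpos : ∀ z : Fin d → ℤ, z ≠ 0 → 0 ≤ a z) (hsum : HasSum a 0)
    (hirr : AddSubgroup.closure {z : Fin d → ℤ | 0 < a z} = ⊤) {θ : Fin d → ℝ}
    (hθ : θ ∈ cube d) (h0 : θ ≠ 0) : phiSymb d a θ < 0 := by
  obtain ⟨C, hC⟩ := exists_norm_sq_le hpos hsum hirr
  have hle : 0 ≤ -phiSymb d a θ := by simpa using term_le_neg_phiSymb hpos hsum θ 0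
  refine lt_of_le_of_ne (by linarith) fun h => ?_
  have := hC θ hθ
  rw [h, neg_zero, mul_zero] at this
  have : 0 < ‖θ‖ ^ 2 := by positivity
  linarith

lemma ae_phiSymb_neg (hd : 1 ≤ d) (hpos : ∀ z : Fin d → ℤ, z ≠ 0 → 0 ≤ a z) (hsum : HasSum a 0)
    (hirr : AddSubgroup.closure {z : Fin d → ℤ | 0 < a z} = ⊤) :
    ∀ᵐ θ ∂(volume.restrict (cube d)), phiSymb d a θ < 0 := by
  have : NeZero d := ⟨by omega⟩
  filter_upwards [ae_restrict_mem measurableSet_Icc,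
    ae_restrict_of_ae (Measure.ae_ne volume (0 : Fin d → ℝ))] with θ hθ h0
  exact phiSymb_neg hpos hsum hirr hθ h0

lemma integrableOn_inv_norm_sq (hd : 3 ≤ d) :
    IntegrableOn (fun θ : Fin d → ℝ => (‖θ‖ ^ 2)⁻¹) (cube d) := by
  have : NeZero d := ⟨by omega⟩
  have hball : IntegrableOn (fun θ : Fin d → ℝ => (‖θ‖ ^ 2)⁻¹) (Metric.ball 0 4) := by
    rw [integrableOn_fun_norm_addHaar volume (f := fun r : ℝ => (r ^ 2)⁻¹)]
    have hc : IntegrableOn (fun r : ℝ => r ^ (d - 3)) (Set.Ioo 0 4) :=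
      ((continuous_pow _).integrableOn_Icc).mono_set Set.Ioo_subset_Icc_self
    refine hc.congr_fun (fun r hr => ?_) measurableSet_Ioo
    have hr0 : r ≠ 0 := hr.1.ne'
    have hdim : Module.finrank ℝ (Fin d → ℝ) - 1 = d - 3 + 2 := by
      simp only [Module.finrank_fintype_fun_eq_card, Fintype.card_fin]; omega
    rw [hdim, pow_add, smul_eq_mul]
    field_simp
  refine hball.mono_set fun θ hθ => ?_
  rw [mem_ball_zero_iff]
  refine lt_of_le_of_lt ((pi_norm_le_iff_of_nonneg pi_pos.le).2 fun i => ?_) pi_lt_four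
  exact abs_le.2 ⟨hθ.1 i, hθ.2 i⟩

lemma integrableOn_inv_phiSymb (hd : 3 ≤ d) (hpos : ∀ z : Fin d → ℤ, z ≠ 0 → 0 ≤ a z)
    (hsum : HasSum a 0) (hirr : AddSubgroup.closure {z : Fin d → ℤ | 0 < a z} = ⊤) :
    IntegrableOn (fun θ => (-phiSymb d a θ)⁻¹) (cube d) := by
  obtain ⟨C, hC⟩ := exists_norm_sq_le hpos hsum hirr
  refine ((integrableOn_inv_norm_sq hd).const_mul C).mono'
    ((continuous_phiSymb hsum.summable).measurable.neg.inv.aestronglyMeasurable) ?_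
  filter_upwards [ae_restrict_mem measurableSet_Icc,
    ae_phiSymb_neg (by omega) hpos hsum hirr] with θ hθ hneg
  have hp : 0 < -phiSymb d a θ := by linarith
  rw [Real.norm_of_nonneg (by positivity)]
  rcases eq_or_ne θ 0 with rfl | h0
  · simp [phiSymb, hsum.tsum_eq] at hneg
  · have hn : 0 < ‖θ‖ ^ 2 := by positivity
    rw [← div_eq_mul_inv, le_div_iff₀ hn, inv_mul_eq_div, div_le_iff₀ hp]
    exact hC θ hθ

/-- The Fourier integrand of the Green's function is dominated by `(-φ)⁻¹`. -/
lemma ae_norm_cos_div_le (hd : 1 ≤ d) (hpos : ∀ z : Fin d → ℤ, z ≠ 0 → 0 ≤ a z)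
    (hsum : HasSum a 0) (hirr : AddSubgroup.closure {z : Fin d → ℤ | 0 < a z} = ⊤)
    {lam : ℝ} (hlam : 0 ≤ lam) (u : (Fin d → ℝ) → ℝ) :
    ∀ᵐ θ ∂(volume.restrict (cube d)),
      ‖cos (u θ) / (lam - phiSymb d a θ)‖ ≤ (-phiSymb d a θ)⁻¹ := by
  filter_upwards [ae_phiSymb_neg hd hpos hsum hirr] with θ hneg
  have hp : 0 < -phiSymb d a θ := by linarith
  rw [norm_div, div_eq_mul_inv, Real.norm_of_nonneg (by linarith : 0 ≤ lam - phiSymb d a θ)]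
  calc _ ≤ 1 * (-phiSymb d a θ)⁻¹ := by
        gcongr
        · exact inv_nonneg.2 (by linarith)
        · exact abs_cos_le_one _
        · linarith
    _ = _ := one_mul _

lemma integrableOn_cos_div (hd : 3 ≤ d) (hpos : ∀ z : Fin d → ℤ, z ≠ 0 → 0 ≤ a z)
    (hsum : HasSum a 0) (hirr : AddSubgroup.closure {z : Fin d → ℤ | 0 < a z} = ⊤)
    {lam : ℝ} (hlam : 0 ≤ lam) {u : (Fin d → ℝ) → ℝ} (hu : Continuous u) :
    IntegrableOn (fun θ => cos (u θ) / (lam - phiSymb d a θ)) (cube d) := by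
  have hm := (continuous_phiSymb hsum.summable).measurable
  refine (integrableOn_inv_phiSymb hd hpos hsum hirr).mono' ?_
    (ae_norm_cos_div_le (by omega) hpos hsum hirr hlam u)
  exact ((continuous_cos.comp hu).measurable.div
    (measurable_const.sub hm)).aestronglyMeasurable

/-- Fourier representation of the Green's function. -/
lemma Glam_eq (hd : 3 ≤ d) (hpos : ∀ z : Fin d → ℤ, z ≠ 0 → 0 ≤ a z)
    (hsum : HasSum a 0) (hirr : AddSubgroup.closure {z : Fin d → ℤ | 0 < a z} = ⊤)
    {lam : ℝ} (hlam : 0 ≤ lam) (x y : Fin d → ℤ) :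
    Glam d a lam x y = ((2 * π) ^ d)⁻¹ * ∫ θ in cube d,
      cos (∑ i, θ i * ((y i : ℝ) - (x i : ℝ))) / (lam - phiSymb d a θ) := by
  have hφ := continuous_phiSymb hsum.summable
  set u : (Fin d → ℝ) → ℝ := fun θ => ∑ i, θ i * ((y i : ℝ) - (x i : ℝ)) with hu
  have huc : Continuous u := by fun_prop
  have hneg := ae_phiSymb_neg (by omega) hpos hsum hirr
  have htime (θ : Fin d → ℝ) (h : phiSymb d a θ < 0) :
      ∫ t in Set.Ioi (0 : ℝ), exp ((phiSymb d a θ - lam) * t) = (lam - phiSymb d a θ)⁻¹ := by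
    rw [integral_exp_mul_Ioi (by linarith), mul_zero, exp_zero, ← neg_sub lam, neg_div_neg_eq,
      one_div]
  have hint : Integrable (Function.uncurry fun (t : ℝ) (θ : Fin d → ℝ) =>
      exp ((phiSymb d a θ - lam) * t) * cos (u θ))
      ((volume.restrict (Set.Ioi 0)).prod (volume.restrict (cube d))) := by
    rw [integrable_prod_iff' (by
      refine Continuous.aestronglyMeasurable ?_
      simp only [Function.uncurry_def]
      fun_prop)]
    constructor
    · filter_upwards [hneg] with θ h
      exact (integrableOn_exp_mul_Ioi (by linarith : phiSymb d a θ - lam < 0) 0).mul_const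
        (cos (u θ))
    · refine (integrableOn_cos_div hd hpos hsum hirr hlam huc).norm.congr ?_
      filter_upwards [hneg] with θ h
      simp only [Function.uncurry_apply_pair, norm_mul, Real.norm_eq_abs, abs_exp]
      rw [integral_mul_const, htime θ h, abs_div, abs_of_pos (by linarith : 0 < lam - phiSymb d a θ),
        div_eq_inv_mul]
  calc Glam d a lam x y
      = ∫ t in Set.Ioi (0 : ℝ), ((2 * π) ^ d)⁻¹ * ∫ θ in cube d,
          exp ((phiSymb d a θ - lam) * t) * cos (u θ) := by
        unfold Glam ptrans
        congr 1 with t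
        rw [mul_left_comm, ← integral_const_mul]
        congr 2 with θ
        rw [← mul_assoc, ← exp_add]
        congr 2
        ring
    _ = ((2 * π) ^ d)⁻¹ * ∫ θ in cube d, cos (u θ) / (lam - phiSymb d a θ) := by
        rw [integral_const_mul, integral_integral_swap hint]
        congr 1
        refine integral_congr_ae ?_
        filter_upwards [hneg] with θ h
        rw [integral_mul_const, htime θ h, div_eq_inv_mul]

lemma tendsto_Glam (hd : 3 ≤ d) (hpos : ∀ z : Fin d → ℤ, z ≠ 0 → 0 ≤ a z)
    (hsum : HasSum a 0) (hirr : AddSubgroup.closure {z : Fin d → ℤ | 0 < a z} = ⊤)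
    (x y : Fin d → ℤ) :
    Tendsto (fun lam => Glam d a lam x y) (𝓝[>] 0) (𝓝 (Glam d a 0 x y)) := by
  have hev : ∀ᶠ lam : ℝ in 𝓝[>] 0, 0 ≤ lam := by
    filter_upwards [self_mem_nhdsWithin] with lam h using le_of_lt h
  rw [Glam_eq hd hpos hsum hirr le_rfl]
  refine Tendsto.congr' (hev.mono fun lam h => (Glam_eq hd hpos hsum hirr h x y).symm) ?_
  refine Tendsto.const_mul _ ?_
  refine tendsto_integral_filter_of_dominated_convergence (fun θ => (-phiSymb d a θ)⁻¹) ?_ ?_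
    (integrableOn_inv_phiSymb hd hpos hsum hirr) ?_
  · exact hev.mono fun lam h =>
      (integrableOn_cos_div hd hpos hsum hirr h (by fun_prop)).aestronglyMeasurable
  · exact hev.mono fun lam h => ae_norm_cos_div_le (by omega) hpos hsum hirr h _
  · filter_upwards [ae_phiSymb_neg (by omega) hpos hsum hirr] with θ h
    refine Tendsto.mono_left ?_ nhdsWithin_le_nhds
    have hc : ContinuousAt (fun lam : ℝ => cos (∑ i, θ i * ((y i : ℝ) - (x i : ℝ))) /
        (lam - phiSymb d a θ)) 0 :=
      continuousAt_const.div (by fun_prop) (by linarith)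
    exact hc

/-- Integrals over the cube of `f / (-φ)` are positive for continuous `f ≥ 0` that do not vanish
at some nonzero interior point. -/
lemma setIntegral_div_pos (hpos : ∀ z : Fin d → ℤ, z ≠ 0 → 0 ≤ a z)
    (hsum : HasSum a 0) (hirr : AddSubgroup.closure {z : Fin d → ℤ | 0 < a z} = ⊤)
    {f : (Fin d → ℝ) → ℝ} (hf : Continuous f) (hf0 : ∀ θ, 0 ≤ f θ)
    (hint : IntegrableOn (fun θ => f θ / -phiSymb d a θ) (cube d))
    {θ₀ : Fin d → ℝ} (hθ₀ : ‖θ₀‖ < π) (hne : θ₀ ≠ 0) (hfθ : f θ₀ ≠ 0) :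
    0 < ∫ θ in cube d, f θ / -phiSymb d a θ := by
  have hφ := continuous_phiSymb hsum.summable
  have hball : Metric.ball (0 : Fin d → ℝ) π ⊆ cube d := fun θ hθ => by
    rw [mem_ball_zero_iff] at hθ
    have h (i : Fin d) := abs_le.1 ((norm_le_pi_norm θ i).trans hθ.le)
    exact ⟨fun i => (h i).1, fun i => (h i).2⟩
  have hφ₀ : phiSymb d a θ₀ ≠ 0 :=
    (phiSymb_neg hpos hsum hirr (hball (mem_ball_zero_iff.2 hθ₀)) hne).ne
  rw [setIntegral_pos_iff_support_of_nonneg_ae _ hint]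
  · have hopen : IsOpen ({θ | f θ ≠ 0} ∩ {θ | phiSymb d a θ ≠ 0} ∩ Metric.ball 0 π) :=
      ((isOpen_ne_fun hf continuous_const).inter
        (isOpen_ne_fun hφ continuous_const)).inter Metric.isOpen_ball
    refine (hopen.measure_pos volume ⟨θ₀, ⟨hfθ, hφ₀⟩, mem_ball_zero_iff.2 hθ₀⟩).trans_le
      (measure_mono ?_)
    rintro θ ⟨⟨h1, h2⟩, h3⟩
    exact ⟨div_ne_zero h1 (neg_ne_zero.2 h2), hball h3⟩
  · refine ae_of_all _ fun θ => div_nonneg (hf0 θ) ?_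
    simpa using term_le_neg_phiSymb hpos hsum θ 0

lemma exists_dot_eq_one {y : Fin d → ℤ} (hy : y ≠ 0) :
    ∃ θ : Fin d → ℝ, ‖θ‖ < π ∧ θ ≠ 0 ∧ ∑ i, θ i * (y i : ℝ) = 1 := by
  obtain ⟨i, hi⟩ := Function.ne_iff.1 hy
  have hi0 : (y i : ℝ) ≠ 0 := by exact_mod_cast hi
  refine ⟨Pi.single i (y i : ℝ)⁻¹, ?_, by simpa using hi0, ?_⟩
  · rw [Pi.norm_single, norm_inv]
    have h1 : (1 : ℝ) ≤ ‖(y i : ℝ)‖ := by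
      rw [Real.norm_eq_abs]
      exact_mod_cast Int.one_le_abs hi
    exact (inv_le_one_of_one_le₀ h1).trans_lt (by linarith [pi_gt_three])
  · simp [Pi.single_apply, hi0]

lemma Glam_add_pos (hd : 3 ≤ d) (hpos : ∀ z : Fin d → ℤ, z ≠ 0 → 0 ≤ a z)
    (hsum : HasSum a 0) (hirr : AddSubgroup.closure {z : Fin d → ℤ | 0 < a z} = ⊤)
    {y : Fin d → ℤ} (hy : y ≠ 0) : 0 < Glam d a 0 0 0 + Glam d a 0 0 y := by
  have h0 := integrableOn_cos_div hd hpos hsum hirr le_rfl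
    (u := fun θ => ∑ i, θ i * (((0 : Fin d → ℤ) i : ℝ) - ((0 : Fin d → ℤ) i : ℝ))) (by fun_prop)
  have h1 := integrableOn_cos_div hd hpos hsum hirr le_rfl
    (u := fun θ => ∑ i, θ i * ((y i : ℝ) - ((0 : Fin d → ℤ) i : ℝ))) (by fun_prop)
  have hadd := h0.add h1
  rw [Glam_eq hd hpos hsum hirr le_rfl, Glam_eq hd hpos hsum hirr le_rfl, ← mul_add,
    ← integral_add h0 h1]
  simp only [Pi.add_def, ← add_div, zero_sub, Pi.zero_apply, Int.cast_zero, sub_zero, mul_zero,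
    Finset.sum_const_zero, cos_zero] at hadd ⊢
  obtain ⟨θ, hθ, hne, hdot⟩ := exists_dot_eq_one hy
  refine mul_pos (by positivity) (setIntegral_div_pos hpos hsum hirr (by fun_prop)
    (fun θ => by linarith [neg_one_le_cos (∑ i, θ i * (y i : ℝ))]) hadd hθ hne ?_)
  rw [hdot]
  linarith [cos_one_pos]

lemma Glam_sub_pos (hd : 3 ≤ d) (hpos : ∀ z : Fin d → ℤ, z ≠ 0 → 0 ≤ a z)
    (hsum : HasSum a 0) (hirr : AddSubgroup.closure {z : Fin d → ℤ | 0 < a z} = ⊤)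
    {y : Fin d → ℤ} (hy : y ≠ 0) : 0 < Glam d a 0 0 0 - Glam d a 0 0 y := by
  have h0 := integrableOn_cos_div hd hpos hsum hirr le_rfl
    (u := fun θ => ∑ i, θ i * (((0 : Fin d → ℤ) i : ℝ) - ((0 : Fin d → ℤ) i : ℝ))) (by fun_prop)
  have h1 := integrableOn_cos_div hd hpos hsum hirr le_rfl
    (u := fun θ => ∑ i, θ i * ((y i : ℝ) - ((0 : Fin d → ℤ) i : ℝ))) (by fun_prop)
  have hsub := h0.sub h1
  rw [Glam_eq hd hpos hsum hirr le_rfl, Glam_eq hd hpos hsum hirr le_rfl, ← mul_sub,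
    ← integral_sub h0 h1]
  simp only [Pi.sub_def, ← sub_div, zero_sub, Pi.zero_apply, Int.cast_zero, sub_zero, mul_zero,
    Finset.sum_const_zero, cos_zero] at hsub ⊢
  obtain ⟨θ, hθ, hne, hdot⟩ := exists_dot_eq_one hy
  refine mul_pos (by positivity) (setIntegral_div_pos hpos hsum hirr (by fun_prop)
    (fun θ => by linarith [cos_le_one (∑ i, θ i * (y i : ℝ))]) hsub hθ hne ?_)
  rw [hdot]
  linarith [cos_one_le]

/-- `ρ_d(v - w) = a (G_0(0, 0) - G_0(w, v))`. -/
lemma rhoConst_sub_eq (hd : 3 ≤ d) (hpos : ∀ z : Fin d → ℤ, z ≠ 0 → 0 ≤ a z)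
    (hsum : HasSum a 0) (hirr : AddSubgroup.closure {z : Fin d → ℤ | 0 < a z} = ⊤)
    {v w : Fin d → ℤ} (h : v ≠ w) :
    rhoConst d a (v - w) = -a 0 * (Glam d a 0 0 0 - Glam d a 0 w v) := by
  have h0 := integrableOn_cos_div hd hpos hsum hirr le_rfl
    (u := fun θ => ∑ i, θ i * (((0 : Fin d → ℤ) i : ℝ) - ((0 : Fin d → ℤ) i : ℝ))) (by fun_prop)
  have h1 := integrableOn_cos_div hd hpos hsum hirr le_rfl
    (u := fun θ => ∑ i, θ i * ((v i : ℝ) - (w i : ℝ))) (by fun_prop)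
  rw [rhoConst, if_neg (sub_ne_zero.2 h), Glam_eq hd hpos hsum hirr le_rfl,
    Glam_eq hd hpos hsum hirr le_rfl, ← mul_sub, ← integral_sub h0 h1, ← mul_assoc, div_eq_mul_inv]
  congr 2 with θ
  simp only [Pi.zero_apply, Pi.sub_apply, Int.cast_sub, Int.cast_zero, sub_self, zero_mul,
    Finset.sum_const_zero, cos_zero, zero_sub, div_neg, mul_comm (θ _)]
  ring

end LatticeWalk

/-- For `d ≥ 3` and `x, y ≠ 0`, `x ≠ y`, the Laplace–Stieltjes transform of the taboo
hitting time converges as `λ → 0+` to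
`(G_0(0,0)ρ_d(y) - G_0(0,0)ρ_d(y-x) + G_0(0,y)ρ_d(x))/(ρ_d(y)(G_0(0,0) + G_0(0,y)))`. -/
theorem taboo_total_mass_high_dim
    (d : ℕ) (hd : 1 ≤ d) (a : (Fin d → ℤ) → ℝ)
    (hpos : ∀ z : Fin d → ℤ, z ≠ 0 → 0 ≤ a z)
    (hneg : a 0 < 0)
    (hsymm : ∀ z : Fin d → ℤ, a (-z) = a z)
    (hsum : HasSum a 0)
    (hvar : Summable fun z : Fin d → ℤ => (∑ i, ((z i : ℝ)) ^ 2) * a z)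
    (hirr : AddSubgroup.closure {z : Fin d → ℤ | 0 < a z} = ⊤)
    (hd3 : 3 ≤ d) (x y : Fin d → ℤ) (hy : y ≠ 0) (hx : x ≠ 0) (hxy : x ≠ y) :
    Tendsto (fun lam : ℝ =>
        (Glam d a lam x y * Glam d a lam 0 0 - Glam d a lam 0 x * Glam d a lam 0 y) /
          ((Glam d a lam 0 0) ^ 2 - (Glam d a lam 0 y) ^ 2))
      (𝓝[>] (0 : ℝ))
      (𝓝 ((Glam d a 0 0 0 * rhoConst d a y - Glam d a 0 0 0 * rhoConst d a (y - x) +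
            Glam d a 0 0 y * rhoConst d a x) /
          (rhoConst d a y * (Glam d a 0 0 0 + Glam d a 0 0 y)))) := by
  have hG := LatticeWalk.tendsto_Glam hd3 hpos hsum hirr
  have hadd := LatticeWalk.Glam_add_pos hd3 hpos hsum hirr hy
  have hsub := LatticeWalk.Glam_sub_pos hd3 hpos hsum hirr hy
  have hρy : rhoConst d a y = -a 0 * (Glam d a 0 0 0 - Glam d a 0 0 y) := by
    simpa using LatticeWalk.rhoConst_sub_eq hd3 hpos hsum hirr hy
  have hρx : rhoConst d a x = -a 0 * (Glam d a 0 0 0 - Glam d a 0 0 x) := by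
    simpa using LatticeWalk.rhoConst_sub_eq hd3 hpos hsum hirr hx
  have hden : Glam d a 0 0 0 ^ 2 - Glam d a 0 0 y ^ 2 ≠ 0 := by
    rw [sq_sub_sq]
    positivity
  convert! (((hG x y).mul (hG 0 0)).sub ((hG 0 x).mul (hG 0 y))).div
    (((hG 0 0).pow 2).sub ((hG 0 y).pow 2)) hden using 2
  rw [hρy, hρx, LatticeWalk.rhoConst_sub_eq hd3 hpos hsum hirr hxy.symm, sq_sub_sq]
  rw [sq_sub_sq] at hden
  rw [div_eq_div_iff
    (mul_ne_zero (mul_ne_zero (neg_ne_zero.2 hneg.ne) hsub.ne') hadd.ne') hden]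
  ring
end

section
/- If d ≥ 3, then for all x, y ∈ ℤ^d with x ≠ 0, y ≠ 0 and x ≠ y, the Green's function satisfies the strict inequality G_0(0, x) + G_0(x, y) < G_0(0, 0) + G_0(0, y); equivalently, ρ_d(x) + ρ_d(y - x) > ρ_d(y) (so that the constant C_d(x, y) := 2γ_d (ρ_d(y-x) + ρ_d(x) - ρ_d(y)) / (a(d-2)(G_0(0,0) + G_0(0,y))²) is strictly positive). -/
open MeasureTheory Real Filter Topology Asymptotics

/-- The pairing `⟨z, θ⟩` of a lattice point with a frequency vector. -/
noncomputable def latPair {d : ℕ} (z : Fin d → ℤ) (θ : Fin d → ℝ) : ℝ :=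
  ∑ i, (z i : ℝ) * θ i

section latPair

variable {d : ℕ}

lemma latPair_zero (θ : Fin d → ℝ) : latPair 0 θ = 0 := by simp [latPair]

lemma latPair_zero_right (z : Fin d → ℤ) : latPair z 0 = 0 := by simp [latPair]

lemma latPair_add (z w : Fin d → ℤ) (θ : Fin d → ℝ) :
    latPair (z + w) θ = latPair z θ + latPair w θ := by
  simp [latPair, add_mul, Finset.sum_add_distrib]

lemma latPair_neg (z : Fin d → ℤ) (θ : Fin d → ℝ) : latPair (-z) θ = -latPair z θ := by
  simp [latPair]

lemma latPair_single (i : Fin d) (θ : Fin d → ℝ) : latPair (Pi.single i 1) θ = θ i := by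
  simp [latPair, Pi.single_apply]

lemma continuous_latPair (z : Fin d → ℤ) : Continuous (latPair z) := by
  unfold latPair
  fun_prop

end latPair

lemma one_sub_cos_add_le (u v : ℝ) :
    1 - cos (u + v) ≤ 2 * (1 - cos u) + 2 * (1 - cos v) := by
  rw [cos_add]
  nlinarith [sq_nonneg (cos u + cos v - 2), sq_nonneg (sin u - sin v), sin_sq_add_cos_sq u,
    sin_sq_add_cos_sq v]

/-- Symmetric, conservative and irreducible jump rates on `ℤ^d`. -/
structure IsWalkGenerator {d : ℕ} (a : (Fin d → ℤ) → ℝ) : Prop where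
  nonneg : ∀ z, z ≠ 0 → 0 ≤ a z
  apply_zero_neg : a 0 < 0
  symm : ∀ z, a (-z) = a z
  hasSum : HasSum a 0
  irreducible : AddSubgroup.closure {z | 0 < a z} = ⊤

namespace IsWalkGenerator

variable {d : ℕ} {a : (Fin d → ℤ) → ℝ}

lemma ne_zero_of_pos (ha : IsWalkGenerator a) {z : Fin d → ℤ} (hz : 0 < a z) : z ≠ 0 := by
  rintro rfl
  exact (hz.trans ha.apply_zero_neg).false

lemma summable_mul_cos (ha : IsWalkGenerator a) (f : (Fin d → ℤ) → ℝ) :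
    Summable fun z => a z * cos (f z) := by
  refine Summable.of_norm_bounded ha.hasSum.summable.abs fun z => ?_
  rw [norm_mul]
  exact mul_le_of_le_one_right (norm_nonneg _) (abs_cos_le_one _)

lemma summable_mul_sin (ha : IsWalkGenerator a) (f : (Fin d → ℤ) → ℝ) :
    Summable fun z => a z * sin (f z) := by
  refine Summable.of_norm_bounded ha.hasSum.summable.abs fun z => ?_
  rw [norm_mul]
  exact mul_le_of_le_one_right (norm_nonneg _) (abs_sin_le_one _)

lemma hasSum_phiSymb (ha : IsWalkGenerator a) (θ : Fin d → ℝ) :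
    HasSum (fun z => a z * cos (latPair z θ)) (phiSymb d a θ) :=
  (ha.summable_mul_cos _).hasSum

lemma continuous_phiSymb (ha : IsWalkGenerator a) : Continuous (phiSymb d a) := by
  refine continuous_tsum (u := fun z => |a z|) (fun z => by fun_prop) ha.hasSum.summable.abs
    fun z θ => ?_
  rw [norm_mul]
  exact mul_le_of_le_one_right (norm_nonneg _) (abs_cos_le_one _)

lemma hasSum_neg_phiSymb (ha : IsWalkGenerator a) (θ : Fin d → ℝ) :
    HasSum (fun z => a z * (1 - cos (latPair z θ))) (-phiSymb d a θ) := by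
  simpa [mul_sub] using ha.hasSum.sub (ha.hasSum_phiSymb θ)

lemma mul_one_sub_cos_nonneg (ha : IsWalkGenerator a) (z : Fin d → ℤ) (θ : Fin d → ℝ) :
    0 ≤ a z * (1 - cos (latPair z θ)) := by
  rcases eq_or_ne z 0 with rfl | hz
  · simp [latPair_zero]
  · exact mul_nonneg (ha.nonneg z hz) (sub_nonneg.2 (cos_le_one _))

lemma neg_phiSymb_nonneg (ha : IsWalkGenerator a) (θ : Fin d → ℝ) : 0 ≤ -phiSymb d a θ :=
  (ha.hasSum_neg_phiSymb θ).nonneg fun z => ha.mul_one_sub_cos_nonneg z θ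

lemma exists_one_sub_cos_le (ha : IsWalkGenerator a) (w : Fin d → ℤ) :
    ∃ C : ℝ, 0 < C ∧ ∀ θ, 1 - cos (latPair w θ) ≤ C * -phiSymb d a θ := by
  have hw : w ∈ AddSubgroup.closure {z | 0 < a z} := ha.irreducible ▸ AddSubgroup.mem_top w
  induction hw using AddSubgroup.closure_induction with
  | mem z hz =>
    refine ⟨(a z)⁻¹, inv_pos.2 hz, fun θ => ?_⟩
    rw [le_inv_mul_iff₀ hz]
    exact le_hasSum (ha.hasSum_neg_phiSymb θ) z fun w _ => ha.mul_one_sub_cos_nonneg w θ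
  | zero => exact ⟨1, one_pos, fun θ => by simpa [latPair_zero] using ha.neg_phiSymb_nonneg θ⟩
  | add u v _ _ hu hv =>
    obtain ⟨C, hC, hu⟩ := hu
    obtain ⟨D, hD, hv⟩ := hv
    refine ⟨2 * C + 2 * D, by positivity, fun θ => ?_⟩
    rw [latPair_add]
    linarith [one_sub_cos_add_le (latPair u θ) (latPair v θ), hu θ, hv θ]
  | neg u _ hu => simpa [latPair_neg] using hu

lemma exists_sq_norm_le (ha : IsWalkGenerator a) :
    ∃ C : ℝ, 0 < C ∧ ∀ θ ∈ Set.Icc (fun _ : Fin d => -π) (fun _ => π),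
      ‖θ‖ ^ 2 ≤ C * -phiSymb d a θ := by
  choose C hC h using fun i : Fin d => ha.exists_one_sub_cos_le (Pi.single i 1)
  have hsum : 0 ≤ ∑ j, C j := Finset.sum_nonneg fun j _ => (hC j).le
  refine ⟨π ^ 2 / 2 * (∑ i, C i + 1), by positivity, fun θ hθ => ?_⟩
  have hφ := ha.neg_phiSymb_nonneg θ
  set b := π ^ 2 / 2 * (∑ i, C i + 1) * -phiSymb d a θ
  have hb : 0 ≤ b := by positivity
  suffices ‖θ‖ ≤ √b by
    calc ‖θ‖ ^ 2 ≤ √b ^ 2 := by gcongr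
      _ = b := sq_sqrt hb
  rw [pi_norm_le_iff_of_nonneg (sqrt_nonneg b)]
  intro i
  apply abs_le_sqrt
  have hi := h i θ
  rw [latPair_single] at hi
  have hcos := cos_le_one_sub_mul_cos_sq (x := θ i) (abs_le.2 ⟨hθ.1 i, hθ.2 i⟩)
  have hCi : C i ≤ ∑ j, C j + 1 := by
    linarith [Finset.single_le_sum (f := C) (fun j _ => (hC j).le) (Finset.mem_univ i)]
  calc θ i ^ 2 = π ^ 2 / 2 * (2 / π ^ 2 * θ i ^ 2) := by field_simp
    _ ≤ π ^ 2 / 2 * ((∑ j, C j + 1) * -phiSymb d a θ) :=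
      mul_le_mul_of_nonneg_left (by linarith [mul_le_mul_of_nonneg_right hCi hφ]) (by positivity)
    _ = b := by ring

lemma neg_phiSymb_pos (ha : IsWalkGenerator a) {θ : Fin d → ℝ}
    (hθ : θ ∈ Set.Icc (fun _ : Fin d => -π) (fun _ => π)) (h0 : θ ≠ 0) :
    0 < -phiSymb d a θ := by
  obtain ⟨C, hC, h⟩ := ha.exists_sq_norm_le
  have : 0 < ‖θ‖ ^ 2 := by positivity
  exact pos_of_mul_pos_right (this.trans_le (h θ hθ)) hC.le

/-- The minimum principle: a function vanishing at infinity that is superharmonic away from `x`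
and nonnegative at `x` is nonnegative. -/
lemma nonneg_of_superharmonic (ha : IsWalkGenerator a) {h : (Fin d → ℤ) → ℝ}
    (hlim : Tendsto h cofinite (𝓝 0)) {x : Fin d → ℤ} (hx : 0 ≤ h x)
    (hsh : ∀ z, z ≠ x → ∃ s ≤ 0, HasSum (fun w => a w * h (z + w)) s) (z : Fin d → ℤ) :
    0 ≤ h z := by
  by_contra! hz
  have hfin : {y | h y ≤ h z}.Finite := by
    have := hlim.eventually (lt_mem_nhds hz)
    simpa [Filter.eventually_cofinite] using this
  obtain ⟨m, hm, hmin⟩ := Set.exists_min_image _ h hfin ⟨z, le_refl (h z)⟩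
  have hmz : h m < 0 := lt_of_le_of_lt hm hz
  replace hmin : ∀ y, h m ≤ h y := fun y => by
    rcases le_total (h y) (h z) with hy | hy
    · exact hmin y hy
    · exact le_trans hm hy
  have step : ∀ w, 0 < a w → ∀ y, h y = h m → h (y + w) = h m := by
    intro w hw y hy
    by_contra hne
    obtain ⟨s, hs, hsum⟩ := hsh y (by rintro rfl; linarith)
    have hdiff : HasSum (fun w => a w * (h (y + w) - h y)) s := by
      simpa [mul_sub] using hsum.sub (ha.hasSum.mul_right (h y))
    refine absurd (hasSum_lt (i := w) (fun v => ?_) ?_ hasSum_zero hdiff) hs.not_gt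
    · rcases eq_or_ne v 0 with rfl | hv
      · simp
      · exact mul_nonneg (ha.nonneg v hv) (sub_nonneg.2 (hy ▸ hmin _))
    · exact mul_pos hw (sub_pos.2 (hy ▸ lt_of_le_of_ne (hmin _) (Ne.symm hne)))
  have hall : ∀ w : Fin d → ℤ, ∀ y, h y = h m → h (y + w) = h m ∧ h (y - w) = h m := by
    intro w
    have hw : w ∈ AddSubgroup.closure {z | 0 < a z} := ha.irreducible ▸ AddSubgroup.mem_top w
    induction hw using AddSubgroup.closure_induction with
    | mem v hv =>
      refine fun y hy => ⟨step v hv y hy, ?_⟩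
      rw [sub_eq_add_neg]
      exact step (-v) (by rw [ha.symm]; exact hv) y hy
    | zero => exact fun y hy => by simpa using hy
    | add u v _ _ hu hv =>
      refine fun y hy => ⟨?_, ?_⟩
      · rw [← add_assoc]
        exact (hv _ (hu y hy).1).1
      · rw [← sub_sub]
        exact (hv _ (hu y hy).2).2
    | neg u _ hu => exact fun y hy => ⟨by simpa [sub_eq_add_neg] using (hu y hy).2,
        by simpa using (hu y hy).1⟩
  have := (hall (x - m) m rfl).1
  rw [add_sub_cancel] at this
  linarith

end IsWalkGenerator

/-- The inverse square of the norm is integrable on a cube in dimension at least three. -/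
lemma integrableOn_inv_sq_norm {d : ℕ} (hd : 3 ≤ d) :
    IntegrableOn (fun θ : Fin d → ℝ => (‖θ‖ ^ 2)⁻¹)
      (Set.Icc (fun _ : Fin d => -π) (fun _ => π)) := by
  have : Nonempty (Fin d) := ⟨⟨0, by lia⟩⟩
  have hrad : IntegrableOn
      (fun r : ℝ => r ^ (Module.finrank ℝ (Fin d → ℝ) - 1) •
        (Set.Iic π).indicator (fun r => (r ^ 2)⁻¹) r) (Set.Ioi 0) := by
    have hpow : IntegrableOn (fun r : ℝ => r ^ (d - 3)) (Set.Ioc 0 π) :=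
      ((continuous_pow (d - 3)).integrableOn_Icc).mono_set Set.Ioc_subset_Icc_self
    have hpow' : IntegrableOn ((Set.Iic π).indicator fun r : ℝ => r ^ (d - 3)) (Set.Ioi 0) := by
      rw [IntegrableOn, integrable_indicator_iff measurableSet_Iic, IntegrableOn,
        Measure.restrict_restrict measurableSet_Iic, Set.inter_comm, Set.Ioi_inter_Iic]
      exact hpow
    refine hpow'.congr_fun (fun r hr => ?_) measurableSet_Ioi
    have hr0 : r ≠ 0 := ne_of_gt hr
    by_cases hπ : r ≤ π
    · obtain ⟨k, rfl⟩ := Nat.exists_eq_add_of_le' hd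
      simp only [Set.mem_Iic, hπ, Set.indicator_of_mem, Module.finrank_fin_fun, smul_eq_mul,
        Nat.add_sub_cancel, Nat.add_succ_sub_one]
      field_simp
      ring
    · simp [hπ]
  have hint := (integrable_fun_norm_addHaar (volume : Measure (Fin d → ℝ))).2 hrad
  refine hint.integrableOn.congr_fun (fun θ hθ => ?_) measurableSet_Icc
  have : ‖θ‖ ≤ π := (pi_norm_le_iff_of_nonneg pi_pos.le).2 fun i => abs_le.2 ⟨hθ.1 i, hθ.2 i⟩
  simp [Set.indicator_of_mem, this]

lemma setIntegral_cos_latPair {d : ℕ} {z : Fin d → ℤ} (hz : z ≠ 0) :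
    ∫ θ in Set.Icc (fun _ : Fin d => -π) (fun _ => π), cos (latPair z θ) = 0 := by
  obtain ⟨i, hi⟩ := Function.ne_iff.1 hz
  have hexp : ∫ θ in Set.Icc (fun _ : Fin d => -π) (fun _ => π),
      Complex.exp (latPair z θ * Complex.I) = 0 := by
    have hprod : ∀ θ : Fin d → ℝ, Complex.exp (latPair z θ * Complex.I) =
        ∏ j, Complex.exp (z j * Complex.I * θ j) := fun θ => by
      rw [← Complex.exp_sum, latPair]
      push_cast
      rw [Finset.sum_mul]
      congr 1
      exact Finset.sum_congr rfl fun j _ => by ring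
    simp_rw [hprod]
    rw [← Set.pi_univ_Icc, volume_pi, Measure.restrict_pi_pi,
      integral_fintype_prod_eq_prod (fun j (t : ℝ) => Complex.exp (z j * Complex.I * t))]
    refine Finset.prod_eq_zero (Finset.mem_univ i) ?_
    have hc : (z i * Complex.I : ℂ) ≠ 0 := mul_ne_zero (by exact_mod_cast hi) Complex.I_ne_zero
    rw [integral_Icc_eq_integral_Ioc, ← intervalIntegral.integral_of_le (by linarith [pi_pos]),
      integral_exp_mul_complex hc]
    have : (z i * Complex.I * (π : ℝ) : ℂ) =
        z i * Complex.I * ((-π : ℝ) : ℂ) + z i * (2 * π * Complex.I) := by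
      push_cast
      ring
    rw [this, Complex.exp_add, Complex.exp_int_mul_two_pi_mul_I]
    simp
  have hcont : Continuous fun θ : Fin d → ℝ => Complex.exp (latPair z θ * Complex.I) := by
    have := continuous_latPair z
    fun_prop
  have := integral_re (𝕜 := ℂ) (hcont.integrableOn_Icc (μ := volume)
    (a := fun _ : Fin d => -π) (b := fun _ => π)).integrable
  rw [hexp] at this
  simpa [Complex.exp_ofReal_mul_I_re] using this

lemma tendsto_intCast_div_two_pi :
    Tendsto (fun n : ℤ => (n : ℝ) * (2 * π)⁻¹) cofinite (cocompact ℝ) :=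
  (Homeomorph.mulRight₀ (2 * π)⁻¹ (by positivity)).isClosedEmbedding.tendsto_cocompact.comp
    Int.tendsto_coe_cofinite

/-- The Riemann–Lebesgue lemma for Fourier cosine coefficients on a cube. -/
lemma tendsto_setIntegral_cos_latPair_mul {d : ℕ} {f : (Fin d → ℝ) → ℝ}
    {s : Set (Fin d → ℝ)} (hs : MeasurableSet s) (hf : IntegrableOn f s) :
    Tendsto (fun z : Fin d → ℤ => ∫ θ in s, cos (latPair z θ) * f θ) cofinite (𝓝 0) := by
  let e := (ContinuousLinearEquiv.piRing (𝕜 := ℝ) (E := ℝ) (Fin d)).symm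
  have hdual : Tendsto (fun z : Fin d → ℤ => e fun i => (z i : ℝ) * (2 * π)⁻¹) cofinite
      (cocompact (StrongDual ℝ (Fin d → ℝ))) := by
    refine e.toHomeomorph.isClosedEmbedding.tendsto_cocompact.comp ?_
    rw [← coprodᵢ_cofinite, ← coprodᵢ_cocompact]
    exact Tendsto.pi_map_coprodᵢ fun _ => tendsto_intCast_div_two_pi
  have hRL := (tendsto_integral_exp_smul_cocompact (fun θ => ((s.indicator f θ : ℝ) : ℂ))
    (volume : Measure (Fin d → ℝ))).comp hdual
  have hre := (Complex.continuous_re.tendsto 0).comp hRL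
  rw [Complex.zero_re] at hre
  refine hre.congr fun z => ?_
  have he : ∀ θ : Fin d → ℝ, e (fun i => (z i : ℝ) * (2 * π)⁻¹) θ =
      (2 * π)⁻¹ * latPair z θ := fun θ => by
    have : e (fun i => (z i : ℝ) * (2 * π)⁻¹) θ = ∑ i, θ i • ((z i : ℝ) * (2 * π)⁻¹) :=
      LinearEquiv.piRing_symm_apply (S := ℝ) (fun i => (z i : ℝ) * (2 * π)⁻¹) θ
    rw [this, latPair, Finset.mul_sum]
    exact Finset.sum_congr rfl fun i _ => by rw [smul_eq_mul]; ring
  have hfC : Integrable (fun θ => ((s.indicator f θ : ℝ) : ℂ)) :=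
    ((integrable_indicator_iff hs).2 hf).ofReal
  have hint := (Real.fourierIntegral_convergent_iff' (ContinuousLinearMap.apply ℝ ℝ)
    (e fun i => (z i : ℝ) * (2 * π)⁻¹)).2 hfC
  have := integral_re hint
  simp only [Function.comp_apply]
  refine this.symm.trans ?_
  rw [← integral_indicator hs]
  refine integral_congr_ae (.of_forall fun θ => ?_)
  simp only [ContinuousLinearMap.apply_apply, he, Circle.smul_def, Real.fourierChar_apply,
    smul_eq_mul]
  have harg : 2 * π * -((2 * π)⁻¹ * latPair z θ) = -latPair z θ := by
    field_simp
  rw [harg]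
  by_cases hθ : θ ∈ s
  · rw [Set.indicator_of_mem hθ, Set.indicator_of_mem hθ, ← cos_neg]
    simp only [RCLike.re_to_complex, Complex.re_mul_ofReal, Complex.exp_ofReal_mul_I_re]
  · simp [hθ]

/-- The kernel `(2π)^{-d} ∫_{[-π,π]^d} cos⟨z,θ⟩ (-φ(θ))⁻¹ dθ`, as a function of the
displacement `z`. -/
noncomputable def greenKernel {d : ℕ} (a : (Fin d → ℤ) → ℝ) (z : Fin d → ℤ) : ℝ :=
  ((2 * π) ^ d)⁻¹ * ∫ θ in Set.Icc (fun _ : Fin d => -π) (fun _ => π),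
    cos (latPair z θ) * (-phiSymb d a θ)⁻¹

namespace IsWalkGenerator

variable {d : ℕ} {a : (Fin d → ℤ) → ℝ}

lemma phiSymb_zero (ha : IsWalkGenerator a) : phiSymb d a 0 = 0 := by
  simpa [latPair_zero_right] using (ha.hasSum_phiSymb 0).unique
    (by simpa [latPair_zero_right] using ha.hasSum)

lemma integrableOn_inv_neg_phiSymb (ha : IsWalkGenerator a) (hd : 3 ≤ d) :
    IntegrableOn (fun θ => (-phiSymb d a θ)⁻¹) (Set.Icc (fun _ : Fin d => -π) (fun _ => π)) := by
  obtain ⟨C, hC, h⟩ := ha.exists_sq_norm_le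
  refine Integrable.mono' ((integrableOn_inv_sq_norm hd).const_mul C)
    ha.continuous_phiSymb.neg.measurable.inv.aestronglyMeasurable ?_
  refine (ae_restrict_iff' measurableSet_Icc).2 (.of_forall fun θ hθ => ?_)
  rcases eq_or_ne θ 0 with rfl | h0
  · simp [ha.phiSymb_zero]
  · have hφ := ha.neg_phiSymb_pos hθ h0
    have hn : 0 < ‖θ‖ ^ 2 := by positivity
    rw [norm_inv, norm_of_nonneg hφ.le, inv_le_comm₀ hφ (by positivity), mul_inv, inv_inv,
      inv_mul_le_iff₀ hC]
    exact h θ hθ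

lemma integrableOn_cos_mul (ha : IsWalkGenerator a) (hd : 3 ≤ d) (z : Fin d → ℤ) :
    IntegrableOn (fun θ => cos (latPair z θ) * (-phiSymb d a θ)⁻¹)
      (Set.Icc (fun _ : Fin d => -π) (fun _ => π)) :=
  (ha.integrableOn_inv_neg_phiSymb hd).bdd_mul (c := 1)
    (continuous_cos.comp (continuous_latPair z)).aestronglyMeasurable
    (.of_forall fun _ => abs_cos_le_one _)

lemma tendsto_greenKernel (ha : IsWalkGenerator a) (hd : 3 ≤ d) :
    Tendsto (greenKernel a) cofinite (𝓝 0) := by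
  rw [← mul_zero ((2 * π) ^ d)⁻¹]
  exact (tendsto_setIntegral_cos_latPair_mul measurableSet_Icc
    (ha.integrableOn_inv_neg_phiSymb hd)).const_mul ((2 * π) ^ d)⁻¹

lemma hasSum_mul_cos_add (ha : IsWalkGenerator a) (z : Fin d → ℤ) (θ : Fin d → ℝ) :
    HasSum (fun w => a w * cos (latPair (z + w) θ)) (cos (latPair z θ) * phiSymb d a θ) := by
  have hsin : HasSum (fun w => a w * sin (latPair w θ)) 0 := by
    have h := (ha.summable_mul_sin fun w => latPair w θ).hasSum
    have hneg := h
    rw [← (Equiv.neg (Fin d → ℤ)).hasSum_iff] at hneg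
    simp only [Function.comp_def, Equiv.neg_apply, ha.symm, latPair_neg, sin_neg, mul_neg]
      at hneg
    have := h.unique (by simpa using hneg.neg)
    convert h
    linarith
  have := ((ha.hasSum_phiSymb θ).mul_left (cos (latPair z θ))).sub
    (hsin.mul_left (sin (latPair z θ)))
  simp only [mul_zero, sub_zero] at this
  refine this.congr_fun fun w => ?_
  rw [latPair_add, cos_add]
  ring

/-- The Green kernel is the fundamental solution of the generator. -/
lemma hasSum_mul_greenKernel (ha : IsWalkGenerator a) (hd : 3 ≤ d) (z : Fin d → ℤ) :
    HasSum (fun w => a w * greenKernel a (z + w))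
      (-(((2 * π) ^ d)⁻¹ * ∫ θ in Set.Icc (fun _ : Fin d => -π) (fun _ => π),
        cos (latPair z θ))) := by
  have hF : ∀ w, Integrable (fun θ => a w * (cos (latPair (z + w) θ) * (-phiSymb d a θ)⁻¹))
      (volume.restrict (Set.Icc (fun _ : Fin d => -π) (fun _ => π))) := fun w =>
    (ha.integrableOn_cos_mul hd (z + w)).const_mul (a w)
  have hsum : Summable fun w => ∫ θ in Set.Icc (fun _ : Fin d => -π) (fun _ => π),
      ‖a w * (cos (latPair (z + w) θ) * (-phiSymb d a θ)⁻¹)‖ := by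
    refine Summable.of_nonneg_of_le (fun w => integral_nonneg fun _ => norm_nonneg _)
      (fun w => ?_) (ha.hasSum.summable.abs.mul_right
        (∫ θ in Set.Icc (fun _ : Fin d => -π) (fun _ => π), (-phiSymb d a θ)⁻¹))
    rw [← integral_const_mul]
    refine integral_mono (hF w).norm ((ha.integrableOn_inv_neg_phiSymb hd).const_mul _)
      fun θ => ?_
    have hφ := inv_nonneg.2 (ha.neg_phiSymb_nonneg θ)
    simp only [norm_mul, norm_of_nonneg hφ, norm_eq_abs]
    exact mul_le_mul_of_nonneg_left (mul_le_of_le_one_left hφ (abs_cos_le_one _)) (abs_nonneg _)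
  have h := (hasSum_integral_of_summable_integral_norm hF hsum).mul_left ((2 * π) ^ d)⁻¹
  have hpt : ∀ᵐ θ : Fin d → ℝ, θ ∈ Set.Icc (fun _ : Fin d => -π) (fun _ => π) →
      ∑' w, a w * (cos (latPair (z + w) θ) * (-phiSymb d a θ)⁻¹) = -cos (latPair z θ) := by
    have : Nonempty (Fin d) := ⟨⟨0, by lia⟩⟩
    filter_upwards [Measure.ae_ne volume (0 : Fin d → ℝ)] with θ h0 hθ
    have hφ := (ha.neg_phiSymb_pos hθ h0).ne'
    have := ((ha.hasSum_mul_cos_add z θ).mul_right (-phiSymb d a θ)⁻¹).tsum_eq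
    simp only [mul_assoc] at this
    rw [this, inv_neg, mul_neg, mul_inv_cancel₀ (neg_ne_zero.1 hφ), mul_neg_one]
  rw [setIntegral_congr_ae measurableSet_Icc hpt, integral_neg, mul_neg] at h
  refine h.congr_fun fun w => ?_
  rw [integral_const_mul, greenKernel]
  ring

lemma setIntegral_mul_inv_pos (ha : IsWalkGenerator a) (hd : 3 ≤ d) {f : (Fin d → ℝ) → ℝ}
    (hf : Continuous f) (hf0 : ∀ θ, 0 ≤ f θ) {θ₀ : Fin d → ℝ} (hθ₀ : ∀ i, θ₀ i ∈ Set.Ioo (-π) π)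
    (hne : θ₀ ≠ 0) (hpos : 0 < f θ₀) :
    0 < ∫ θ in Set.Icc (fun _ : Fin d => -π) (fun _ => π), f θ * (-phiSymb d a θ)⁻¹ := by
  have hint : IntegrableOn (fun θ => f θ * (-phiSymb d a θ)⁻¹)
      (Set.Icc (fun _ : Fin d => -π) (fun _ => π)) :=
    (ha.integrableOn_inv_neg_phiSymb hd).continuousOn_mul hf.continuousOn isCompact_Icc
  rw [setIntegral_pos_iff_support_of_nonneg_ae (.of_forall fun θ =>
    mul_nonneg (hf0 θ) (inv_nonneg.2 (ha.neg_phiSymb_nonneg θ))) hint]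
  have hopen : IsOpen ({θ | 0 < f θ} ∩ {0}ᶜ ∩ Set.univ.pi fun _ : Fin d => Set.Ioo (-π) π) :=
    ((isOpen_lt continuous_const hf).inter isOpen_compl_singleton).inter
      (isOpen_set_pi Set.finite_univ fun _ _ => isOpen_Ioo)
  refine (hopen.measure_pos volume ⟨θ₀, ⟨hpos, hne⟩, fun i _ => hθ₀ i⟩).trans_le
    (measure_mono ?_)
  rintro θ ⟨⟨hfθ, h0⟩, hθ⟩
  have hmem : θ ∈ Set.Icc (fun _ : Fin d => -π) (fun _ => π) :=
    ⟨fun i => (hθ i trivial).1.le, fun i => (hθ i trivial).2.le⟩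
  exact ⟨mul_ne_zero (ne_of_gt hfθ) (inv_ne_zero (ha.neg_phiSymb_pos hmem h0).ne'), hmem⟩

lemma abs_greenKernel_lt (ha : IsWalkGenerator a) (hd : 3 ≤ d) {x : Fin d → ℤ} (hx : x ≠ 0) :
    |greenKernel a x| < greenKernel a 0 := by
  obtain ⟨i, hi⟩ := Function.ne_iff.1 hx
  have hi' : (x i : ℝ) ≠ 0 := by exact_mod_cast hi
  have hone : 1 ≤ |(x i : ℝ)| := by exact_mod_cast Int.one_le_abs hi
  have hpair : latPair x (Pi.single i (x i : ℝ)⁻¹) = 1 := by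
    simp [latPair, Pi.single_apply, hi']
  have hmem : ∀ j, (Pi.single i (x i : ℝ)⁻¹ : Fin d → ℝ) j ∈ Set.Ioo (-π) π := by
    intro j
    rw [Set.mem_Ioo, ← abs_lt]
    rcases eq_or_ne j i with rfl | hj
    · rw [Pi.single_eq_same, abs_inv]
      linarith [inv_le_one_of_one_le₀ hone, pi_gt_three]
    · simp [hj, pi_pos]
  have hne : (Pi.single i (x i : ℝ)⁻¹ : Fin d → ℝ) ≠ 0 := by simpa using hi'
  have hcos : Continuous fun θ : Fin d → ℝ => cos (latPair x θ) :=
    continuous_cos.comp (continuous_latPair x)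
  have hc : 0 < ((2 * π) ^ d)⁻¹ := by positivity
  have hzero := ha.integrableOn_cos_mul hd 0
  have hxint := ha.integrableOn_cos_mul hd x
  have hsub := ha.setIntegral_mul_inv_pos hd (f := fun θ => 1 - cos (latPair x θ)) (by fun_prop)
    (fun θ => sub_nonneg.2 (cos_le_one _)) hmem hne (by rw [hpair]; linarith [cos_one_le])
  have hadd := ha.setIntegral_mul_inv_pos hd (f := fun θ => 1 + cos (latPair x θ)) (by fun_prop)
    (fun θ => by linarith [neg_one_le_cos (latPair x θ)]) hmem hne
    (by rw [hpair]; linarith [cos_one_pos])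
  simp only [sub_mul, add_mul] at hsub hadd
  simp only [latPair_zero, cos_zero] at hzero
  rw [integral_sub hzero hxint] at hsub
  rw [integral_add hzero hxint] at hadd
  rw [abs_lt]
  simp only [greenKernel, latPair_zero, cos_zero]
  constructor
  · rw [← mul_neg_one, mul_assoc]
    nlinarith
  · nlinarith

/-- Supermultiplicativity of the Green kernel, the analytic form of the strong Markov property
at the hitting time of `x`. -/
lemma greenKernel_mul_le (ha : IsWalkGenerator a) (hd : 3 ≤ d) {x : Fin d → ℤ} (hx : x ≠ 0)
    (y : Fin d → ℤ) :
    greenKernel a x * greenKernel a (y - x) ≤ greenKernel a 0 * greenKernel a y := by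
  have h0 : 0 < greenKernel a 0 := (abs_nonneg _).trans_lt (ha.abs_greenKernel_lt hd hx)
  rw [← sub_nonneg]
  refine ha.nonneg_of_superharmonic (x := x)
    (h := fun y => greenKernel a 0 * greenKernel a y - greenKernel a x * greenKernel a (y - x))
    ?_ (by simp [mul_comm]) (fun z hz => ?_) y
  · have hshift := (ha.tendsto_greenKernel hd).comp (sub_left_injective (b := x)).tendsto_cofinite
    simpa using ((ha.tendsto_greenKernel hd).const_mul (greenKernel a 0)).sub
      (hshift.const_mul (greenKernel a x))
  · have h1 := (ha.hasSum_mul_greenKernel hd z).mul_left (greenKernel a 0)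
    have h2 := (ha.hasSum_mul_greenKernel hd (z - x)).mul_left (greenKernel a x)
    rw [setIntegral_cos_latPair (sub_ne_zero.2 hz), mul_zero, neg_zero, mul_zero] at h2
    have h := h1.sub h2
    refine ⟨_, ?_, h.congr_fun fun w => ?_⟩
    · rw [sub_zero]
      refine mul_nonpos_of_nonneg_of_nonpos h0.le (neg_nonpos.2 (mul_nonneg (by positivity) ?_))
      rcases eq_or_ne z 0 with rfl | hz0
      · exact integral_nonneg fun θ => by simp [latPair_zero]
      · rw [setIntegral_cos_latPair hz0]
    · rw [show z + w - x = z - x + w by abel]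
      ring

lemma greenKernel_add_lt (ha : IsWalkGenerator a) (hd : 3 ≤ d) {x y : Fin d → ℤ} (hx : x ≠ 0)
    (hxy : x ≠ y) :
    greenKernel a x + greenKernel a (y - x) < greenKernel a 0 + greenKernel a y := by
  have hx' := (abs_lt.1 (ha.abs_greenKernel_lt hd hx)).2
  have hyx' := (abs_lt.1 (ha.abs_greenKernel_lt hd (sub_ne_zero.2 hxy.symm))).2
  have h0 : 0 < greenKernel a 0 := (abs_nonneg _).trans_lt (ha.abs_greenKernel_lt hd hx)
  have hmul := ha.greenKernel_mul_le hd hx y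
  refine lt_of_mul_lt_mul_left ?_ h0.le
  nlinarith [mul_pos (sub_pos.2 hx') (sub_pos.2 hyx')]

lemma Glam_zero_eq_greenKernel (ha : IsWalkGenerator a) (hd : 3 ≤ d) (x y : Fin d → ℤ) :
    Glam d a 0 x y = greenKernel a (y - x) := by
  have : Nonempty (Fin d) := ⟨⟨0, by lia⟩⟩
  let F : ℝ → (Fin d → ℝ) → ℝ := fun t θ => exp (phiSymb d a θ * t) * cos (latPair (y - x) θ)
  have hφ : Continuous (phiSymb d a) := ha.continuous_phiSymb
  have hcos : Continuous (latPair (y - x)) := continuous_latPair _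
  have hae : ∀ᵐ θ ∂(volume.restrict (Set.Icc (fun _ : Fin d => -π) (fun _ => π))),
      phiSymb d a θ < 0 := by
    rw [ae_restrict_iff' measurableSet_Icc]
    filter_upwards [Measure.ae_ne volume (0 : Fin d → ℝ)] with θ h0 hθ
    exact neg_pos.1 (ha.neg_phiSymb_pos hθ h0)
  have hnorm : ∀ t θ, ‖F t θ‖ = exp (phiSymb d a θ * t) * |cos (latPair (y - x) θ)| := fun t θ => by
    rw [norm_mul, norm_of_nonneg (exp_pos _).le, norm_eq_abs]
  have hint : Integrable (Function.uncurry F) ((volume.restrict (Set.Ioi (0 : ℝ))).prod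
      (volume.restrict (Set.Icc (fun _ : Fin d => -π) (fun _ => π)))) := by
    rw [integrable_prod_iff' (by fun_prop : Continuous (Function.uncurry F)).aestronglyMeasurable]
    constructor
    · filter_upwards [hae] with θ hθ
      exact (integrableOn_exp_mul_Ioi hθ 0).mul_const (cos (latPair (y - x) θ))
    · refine (ha.integrableOn_cos_mul hd (y - x)).norm.congr ?_
      filter_upwards [hae] with θ hθ
      simp only [Function.uncurry_apply_pair, hnorm]
      rw [integral_mul_const, integral_exp_mul_Ioi hθ, norm_mul, norm_inv, norm_neg,
        norm_of_nonpos hθ.le, norm_eq_abs, mul_zero, exp_zero, neg_div, one_div, inv_neg]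
      ring
  have hG : Glam d a 0 x y = ∫ t in Set.Ioi (0 : ℝ), ((2 * π) ^ d)⁻¹ *
      ∫ θ in Set.Icc (fun _ : Fin d => -π) (fun _ => π), F t θ := by
    simp only [Glam, ptrans, F, latPair, neg_zero, zero_mul, exp_zero, one_mul, Pi.sub_apply,
      Int.cast_sub, mul_comm (_ - _ : ℝ)]
  rw [hG, integral_const_mul, integral_integral_swap hint, greenKernel]
  congr 1
  refine integral_congr_ae ?_
  filter_upwards [hae] with θ hθ
  rw [integral_mul_const, integral_exp_mul_Ioi hθ, mul_zero, exp_zero, neg_div, one_div, inv_neg]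
  ring

lemma rhoConst_eq (ha : IsWalkGenerator a) (hd : 3 ≤ d) {z : Fin d → ℤ} (hz : z ≠ 0) :
    rhoConst d a z = -a 0 * (greenKernel a 0 - greenKernel a z) := by
  have hzero := ha.integrableOn_cos_mul hd 0
  have hzint := ha.integrableOn_cos_mul hd z
  rw [rhoConst, if_neg hz, greenKernel, greenKernel, ← mul_sub, ← integral_sub hzero hzint,
    div_eq_mul_inv, mul_assoc]
  congr 2
  refine integral_congr_ae (.of_forall fun θ => ?_)
  simp only [latPair_zero, cos_zero]
  rw [inv_neg, div_eq_mul_inv, latPair]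
  ring

lemma eq_zero_of_latPair_eq_zero (ha : IsWalkGenerator a) {v : Fin d → ℝ}
    (hv : ∀ z, 0 < a z → latPair z v = 0) : v = 0 := by
  have hall : ∀ w, latPair w v = 0 := fun w => by
    have hw : w ∈ AddSubgroup.closure {z | 0 < a z} := ha.irreducible ▸ AddSubgroup.mem_top w
    induction hw using AddSubgroup.closure_induction with
    | mem z hz => exact hv z hz
    | zero => exact latPair_zero v
    | add x y _ _ hx hy => rw [latPair_add, hx, hy, add_zero]
    | neg x _ hx => rw [latPair_neg, hx, neg_zero]
  exact funext fun i => (latPair_single i v).symm.trans (hall _)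

lemma det_hessPhi_ne_zero (ha : IsWalkGenerator a)
    (hvar : Summable fun z : Fin d → ℤ => (∑ i, ((z i : ℝ)) ^ 2) * a z) :
    (hessPhi d a).det ≠ 0 := by
  intro hdet
  obtain ⟨v, hv0, hv⟩ := Matrix.exists_mulVec_eq_zero_iff.2 hdet
  refine hv0 (ha.eq_zero_of_latPair_eq_zero fun z hz => ?_)
  have hsummable : ∀ i j, Summable fun z : Fin d → ℤ => a z * (z i : ℝ) * (z j : ℝ) := by
    intro i j
    refine Summable.of_norm_bounded hvar.abs fun z => ?_
    have hle : ∀ k, (z k : ℝ) ^ 2 ≤ ∑ l, (z l : ℝ) ^ 2 := fun k =>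
      Finset.single_le_sum (f := fun l => (z l : ℝ) ^ 2) (fun _ _ => sq_nonneg _)
        (Finset.mem_univ k)
    have hmul : |(z i : ℝ) * z j| ≤ ∑ l, (z l : ℝ) ^ 2 := by
      rw [abs_le]
      constructor <;> nlinarith [hle i, hle j, sq_nonneg ((z i : ℝ) - z j),
        sq_nonneg ((z i : ℝ) + z j)]
    rw [mul_assoc, norm_mul, norm_eq_abs, norm_eq_abs, abs_mul (∑ l, (z l : ℝ) ^ 2),
      abs_of_nonneg ((sq_nonneg _).trans (hle i)), mul_comm]
    exact mul_le_mul_of_nonneg_right hmul (abs_nonneg _)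
  have hquad : HasSum (fun z => a z * latPair z v ^ 2) 0 := by
    have h := hasSum_sum (s := Finset.univ) fun i _ => (hasSum_sum (s := Finset.univ) fun j _ =>
      ((hsummable i j).hasSum.mul_right (v j))).mul_left (v i)
    have hzero : ∑ i, v i * ∑ j, (∑' z : Fin d → ℤ, a z * (z i : ℝ) * (z j : ℝ)) * v j = 0 := by
      refine Finset.sum_eq_zero fun i _ => ?_
      have := congrFun hv i
      simp only [Matrix.mulVec, dotProduct, hessPhi, Matrix.of_apply, neg_mul,
        Finset.sum_neg_distrib, Pi.zero_apply, neg_eq_zero] at this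
      rw [this, mul_zero]
    rw [hzero] at h
    refine h.congr_fun fun z => ?_
    rw [sq, latPair, Finset.sum_mul_sum, Finset.mul_sum]
    refine Finset.sum_congr rfl fun i _ => ?_
    rw [Finset.mul_sum, Finset.mul_sum]
    exact Finset.sum_congr rfl fun j _ => by ring
  have hterm := (hasSum_zero_iff_of_nonneg fun z => ?_).1 hquad
  · simpa [hz.ne'] using congrFun hterm z
  · rcases eq_or_ne z 0 with rfl | hz
    · simp [latPair_zero]
    · exact mul_nonneg (ha.nonneg z hz) (sq_nonneg _)

lemma gammaConst_pos (ha : IsWalkGenerator a)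
    (hvar : Summable fun z : Fin d → ℤ => (∑ i, ((z i : ℝ)) ^ 2) * a z) :
    0 < gammaConst d a := by
  have := abs_pos.2 (ha.det_hessPhi_ne_zero hvar)
  unfold gammaConst
  positivity

end IsWalkGenerator

/-- For `d ≥ 3` and `x, y ≠ 0`, `x ≠ y`: the strict inequality
`G_0(0,x) + G_0(x,y) < G_0(0,0) + G_0(0,y)` holds; equivalently
`ρ_d(x) + ρ_d(y-x) > ρ_d(y)`, so that `C_d(x,y) > 0`. -/
theorem green_strict_inequality
    (d : ℕ) (hd : 1 ≤ d) (a : (Fin d → ℤ) → ℝ)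
    (hpos : ∀ z : Fin d → ℤ, z ≠ 0 → 0 ≤ a z)
    (hneg : a 0 < 0)
    (hsymm : ∀ z : Fin d → ℤ, a (-z) = a z)
    (hsum : HasSum a 0)
    (hvar : Summable fun z : Fin d → ℤ => (∑ i, ((z i : ℝ)) ^ 2) * a z)
    (hirr : AddSubgroup.closure {z : Fin d → ℤ | 0 < a z} = ⊤)
    (hd3 : 3 ≤ d) (x y : Fin d → ℤ) (hx : x ≠ 0) (hy : y ≠ 0) (hxy : x ≠ y) :
    Glam d a 0 0 x + Glam d a 0 x y < Glam d a 0 0 0 + Glam d a 0 0 y ∧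
    rhoConst d a y < rhoConst d a x + rhoConst d a (y - x) ∧
    0 < 2 * gammaConst d a * (rhoConst d a (y - x) + rhoConst d a x - rhoConst d a y) /
        ((-(a 0)) * ((d : ℝ) - 2) * (Glam d a 0 0 0 + Glam d a 0 0 y) ^ 2) := by
  have ha : IsWalkGenerator a := ⟨hpos, hneg, hsymm, hsum, hirr⟩
  have hyx : y - x ≠ 0 := sub_ne_zero.2 hxy.symm
  have hlt := ha.greenKernel_add_lt hd3 hx hxy
  have hρ : rhoConst d a y < rhoConst d a x + rhoConst d a (y - x) := by
    rw [ha.rhoConst_eq hd3 hx, ha.rhoConst_eq hd3 hy, ha.rhoConst_eq hd3 hyx]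
    nlinarith [mul_pos (neg_pos.2 hneg) (sub_pos.2 hlt)]
  have hγ := ha.gammaConst_pos hvar
  have hd' : (3 : ℝ) ≤ d := by exact_mod_cast hd3
  simp only [ha.Glam_zero_eq_greenKernel hd3, sub_zero]
  have hG : 0 < greenKernel a 0 + greenKernel a y := by
    linarith [(abs_lt.1 (ha.abs_greenKernel_lt hd3 hy)).1]
  refine ⟨hlt, hρ, div_pos (mul_pos (by positivity) (by linarith)) ?_⟩
  exact mul_pos (mul_pos (neg_pos.2 hneg) (by linarith)) (by positivity)
end
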